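/- Let 0<r<1, α>0 and β∈ℝ. Then for every integer n ≥ n₁(α,r) one has E_n(C^{α,r}_{β,∞})_C = (4/π²) e^{-α n^r} ln(π n^{1-r}/(αr)) + γ_n e^{-α n^r}, where the quantity γ_n = γ_n(α,r,β) satisfies |γ_n| ≤ 20 π⁴. -/

import Mathlib

open MeasureTheory Real Filter
open scoped ENNReal

/-- The generalized Poisson kernel `P_{α,r,β}(t) = Σ_{k=1}^∞ e^{-α k^r} cos(kt − βπ/2)`. -/
noncomputable def genPoissonKernel (α r β : ℝ) (t : ℝ) : ℝ :=
  ∑' k : ℕ, Real.exp (-α * ((k : ℝ) + 1) ^ r) * Real.cos (((k : ℝ) + 1) * t - β * π / 2)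

/-- Fourier cosine coefficient `a_k = (1/π)∫_{-π}^{π} f(t) cos(kt) dt`. -/
noncomputable def fourierCoefA (f : ℝ → ℝ) (k : ℕ) : ℝ :=
  (1 / π) * ∫ t in (-π)..π, f t * Real.cos (k * t)

/-- Fourier sine coefficient `b_k = (1/π)∫_{-π}^{π} f(t) sin(kt) dt`. -/
noncomputable def fourierCoefB (f : ℝ → ℝ) (k : ℕ) : ℝ :=
  (1 / π) * ∫ t in (-π)..π, f t * Real.sin (k * t)

/-- Partial Fourier sum of order `m` of `f`. -/
noncomputable def fourierSum (m : ℕ) (f : ℝ → ℝ) (x : ℝ) : ℝ :=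
  fourierCoefA f 0 / 2 +
    ∑ k ∈ Finset.Icc 1 m, (fourierCoefA f k * Real.cos (k * x) + fourierCoefB f k * Real.sin (k * x))

/-- The class `C^{α,r}_{β,p}` of generalized Poisson integrals. -/
def poissonClass (α r β : ℝ) (p : ℝ≥0∞) : Set (ℝ → ℝ) :=
  {f | (∀ x, f (x + 2 * π) = f x) ∧ ∃ a₀ : ℝ, ∃ φ : ℝ → ℝ,
    (∀ x, φ (x + 2 * π) = φ x) ∧
    eLpNorm φ p (volume.restrict (Set.Ioc (0 : ℝ) (2 * π))) ≤ 1 ∧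
    (∫ t in (0 : ℝ)..(2 * π), φ t) = 0 ∧
    ∀ x, f x = a₀ / 2 + (1 / π) * ∫ t in (-π)..π, genPoissonKernel α r β (x - t) * φ t}

/-- `E_n(C^{α,r}_{β,p})_C`: uniform deviation of Fourier sums of order `n-1` on the class. -/
noncomputable def EnC (α r β : ℝ) (p : ℝ≥0∞) (n : ℕ) : ℝ :=
  ⨆ f ∈ poissonClass α r β p, ⨆ x : ℝ, |f x - fourierSum (n - 1) f x|

/-- `n₁(α,r)`: the smallest positive integer `n` with
`(1/(αr)) n^{-r} (1 + ln(π n^{1-r}/(αr))) + αr n^{-(1-r)} ≤ 1/(3π)³`. -/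
noncomputable def n₁ (α r : ℝ) : ℕ :=
  sInf {n : ℕ | 0 < n ∧
    1 / (α * r) * (n : ℝ) ^ (-r) * (1 + Real.log (π * (n : ℝ) ^ (1 - r) / (α * r))) +
      α * r * (n : ℝ) ^ (-(1 - r)) ≤ 1 / (3 * π) ^ 3}



/-- difference operator on functions -/
def dOp (f : ℝ → ℝ) : ℝ → ℝ := fun x => f x - f (x + 1)

/-- cone of functions -/
inductive CMf (α r : ℝ) : (ℝ → ℝ) → Prop
  | base (p : ℝ) (hp : 0 ≤ p) : CMf α r (fun x => x ^ (-p) * Real.exp (-α * x ^ r))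
  | add (f g : ℝ → ℝ) (hf : CMf α r f) (hg : CMf α r g) : CMf α r (fun x => f x + g x)
  | smul (c : ℝ) (hc : 0 ≤ c) (f : ℝ → ℝ) (hf : CMf α r f) : CMf α r (fun x => c * f x)

lemma CMf.nonneg {α r : ℝ} {f : ℝ → ℝ} (hf : CMf α r f) : ∀ x, 0 < x → 0 ≤ f x := by
  induction hf with
  | base p hp => intro x hx; positivity
  | add f g _ _ h1 h2 => intro x hx; exact add_nonneg (h1 x hx) (h2 x hx)
  | smul c hc f _ h => intro x hx; exact mul_nonneg hc (h x hx)

lemma CMf.deriv {α r : ℝ} (hα : 0 < α) (hr0 : 0 < r) (hr1 : r < 1) {f : ℝ → ℝ} (hf : CMf α r f) :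
    ∃ g, CMf α r g ∧ ∀ x, 0 < x → HasDerivAt f (-g x) x := by
  induction hf with
  | base p hp =>
    refine ⟨fun x => (p * (x ^ (-(p + 1)) * Real.exp (-α * x ^ r))) +
      (α * r) * (x ^ (-(p + 1 - r)) * Real.exp (-α * x ^ r)), ?_, ?_⟩
    · exact CMf.add _ _ (CMf.smul p hp _ (CMf.base _ (by linarith)))
        (CMf.smul _ (by positivity) _ (CMf.base _ (by linarith)))
    · intro x hx
      have h1 : HasDerivAt (fun x : ℝ => x ^ (-p)) (-p * x ^ (-p - 1)) x :=
        Real.hasDerivAt_rpow_const (Or.inl hx.ne')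
      have h2 : HasDerivAt (fun x : ℝ => x ^ r) (r * x ^ (r - 1)) x :=
        Real.hasDerivAt_rpow_const (Or.inl hx.ne')
      have h3 := h1.mul ((h2.const_mul (-α)).exp)
      refine h3.congr_deriv ?_
      have e1 : x ^ (-(p + 1 - r)) = x ^ (-p) * x ^ (r - 1) := by
        rw [← Real.rpow_add hx]; congr 1; ring
      have e2 : -(p + 1) = -p - 1 := by ring
      beta_reduce
      rw [e1, e2]; ring
  | add f g _ _ h1 h2 =>
    obtain ⟨f', hf', h1⟩ := h1
    obtain ⟨g', hg', h2⟩ := h2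
    refine ⟨_, CMf.add _ _ hf' hg', fun x hx => ?_⟩
    exact ((h1 x hx).add (h2 x hx)).congr_deriv (by ring)
  | smul c hc f _ h =>
    obtain ⟨f', hf', h1⟩ := h
    refine ⟨_, CMf.smul c hc _ hf', fun x hx => ?_⟩
    exact ((h1 x hx).const_mul c).congr_deriv (by ring)

lemma dOp_iter_deriv {f g : ℝ → ℝ} (h : ∀ x, 0 < x → HasDerivAt f (-g x) x) (m : ℕ) :
    ∀ x, 0 < x → HasDerivAt (dOp^[m] f) (-(dOp^[m] g) x) x := by
  induction m with
  | zero => simpa using h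
  | succ m ih =>
    intro x hx
    rw [Function.iterate_succ_apply', Function.iterate_succ_apply']
    have h1 := ih x hx
    have h2 := (ih (x + 1) (by linarith)).comp_add_const x 1
    exact (h1.sub h2).congr_deriv (by simp only [dOp]; ring)

lemma CMf.dOp_nonneg {α r : ℝ} (hα : 0 < α) (hr0 : 0 < r) (hr1 : r < 1) (m : ℕ) :
    ∀ f, CMf α r f → ∀ x, 0 < x → 0 ≤ (dOp^[m] f) x := by
  induction m with
  | zero => intro f hf x hx; exact hf.nonneg x hx
  | succ m ih =>
    intro f hf x hx
    obtain ⟨g, hg, hd⟩ := hf.deriv hα hr0 hr1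
    have hd' := dOp_iter_deriv hd m
    rw [Function.iterate_succ_apply']
    simp only [dOp, sub_nonneg]
    have : AntitoneOn (dOp^[m] f) (Set.Ioi 0) := by
      apply antitoneOn_of_deriv_nonpos (convex_Ioi 0)
      · intro y hy; exact (hd' y hy).continuousAt.continuousWithinAt
      · intro y hy; rw [interior_Ioi] at hy
        exact (hd' y hy).differentiableAt.differentiableWithinAt
      · intro y hy; rw [interior_Ioi] at hy
        rw [(hd' y hy).deriv]
        have := ih g hg y hy
        linarith
    exact this hx (by simp; linarith) (by linarith)

/-- difference operator on sequences -/
def dS (a : ℕ → ℝ) : ℕ → ℝ := fun k => a k - a (k + 1)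

/-- completely monotone sequences -/
def CMs (a : ℕ → ℝ) : Prop := ∀ m k, 0 ≤ (dS^[m] a) k

lemma dS_iter_shift (a : ℕ → ℝ) (m : ℕ) : ∀ k, (dS^[m] (fun k => a (k + 1))) k = (dS^[m] a) (k + 1) := by
  induction m with
  | zero => intro k; rfl
  | succ m ih =>
    intro k
    rw [Function.iterate_succ_apply', Function.iterate_succ_apply']
    simp only [dS, ih]

lemma CMs.shift {a : ℕ → ℝ} (h : CMs a) : CMs (fun k => a (k + 1)) := by
  intro m k; rw [dS_iter_shift]; exact h m _

lemma CMs.dS {a : ℕ → ℝ} (h : CMs a) : CMs (dS a) := by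
  intro m k; rw [← Function.iterate_succ_apply]; exact h _ _

lemma dS_dOp (f : ℝ → ℝ) (x : ℝ) (m : ℕ) :
    ∀ k, (dS^[m] (fun k : ℕ => f (x + k))) k = (dOp^[m] f) (x + k) := by
  induction m with
  | zero => intro k; rfl
  | succ m ih =>
    intro k
    rw [Function.iterate_succ_apply', Function.iterate_succ_apply']
    simp only [_root_.dS, ih, dOp]; push_cast; ring_nf

lemma CMs_exp {α r : ℝ} (hα : 0 < α) (hr0 : 0 < r) (hr1 : r < 1) {x : ℝ} (hx : 0 < x) :
    CMs (fun k : ℕ => Real.exp (-α * (x + k) ^ r)) := by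
  intro m k
  have h : CMf α r (fun x => Real.exp (-α * x ^ r)) := by
    have := CMf.base (α := α) (r := r) 0 le_rfl
    simpa using this
  have := dS_dOp (fun x => Real.exp (-α * x ^ r)) x m k
  rw [this]
  exact CMf.dOp_nonneg hα hr0 hr1 m _ h _ (by positivity)

/-- The operator `2E - 1`. -/
def tS (a : ℕ → ℝ) : ℕ → ℝ := fun k => 2 * a (k + 1) - a k

lemma tS_iter_sub (a b : ℕ → ℝ) (m : ℕ) :
    ∀ k, (tS^[m] (fun k => a k - b k)) k = (tS^[m] a) k - (tS^[m] b) k := by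
  induction m with
  | zero => intro k; rfl
  | succ m ih =>
    intro k
    rw [Function.iterate_succ_apply', Function.iterate_succ_apply', Function.iterate_succ_apply']
    simp only [tS, ih]; ring

lemma CMs.tS_bound (m : ℕ) : ∀ a, CMs a → ∀ k, |(tS^[m] a) k| ≤ a k := by
  induction m with
  | zero => intro a ha k; simpa using (abs_of_nonneg (ha 0 k)).le
  | succ m ih =>
    intro a ha k
    rw [Function.iterate_succ_apply]
    have e : tS a = fun k => a (k + 1) - _root_.dS a k := by
      funext k; simp only [tS, _root_.dS]; ring
    rw [e, tS_iter_sub]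
    have h1 := ih _ ha.shift k
    have h2 := ih _ ha.dS k
    simp only [_root_.dS] at h1 h2 ⊢
    refine (abs_sub _ _).trans ?_
    linarith


lemma int_cos_int (m : ℤ) : ∫ x in (-π)..π, Real.cos (m * x) = if m = 0 then 2 * π else 0 := by
  split_ifs with h
  · subst h; simp; ring
  · have hm : (m : ℝ) ≠ 0 := by exact_mod_cast h
    rw [intervalIntegral.integral_comp_mul_left (fun x => Real.cos x) hm, integral_cos]
    have : Real.sin (m * π) = 0 := Real.sin_int_mul_pi m
    simp [this]

lemma int_sin_int (m : ℤ) : ∫ x in (-π)..π, Real.sin (m * x) = 0 := by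
  by_cases h : m = 0
  · subst h; simp
  · have hm : (m : ℝ) ≠ 0 := by exact_mod_cast h
    rw [intervalIntegral.integral_comp_mul_left (fun x => Real.sin x) hm, integral_sin]
    simp

lemma int_cos_cos (j k : ℕ) : ∫ x in (-π)..π, Real.cos (((j : ℝ) + 1) * x) * Real.cos (k * x) =
    if j + 1 = k then π else 0 := by
  have e : ∀ x : ℝ, Real.cos (((j : ℝ) + 1) * x) * Real.cos (k * x) =
      (1 / 2) * Real.cos (((j + 1 - k : ℤ) : ℝ) * x) + (1 / 2) * Real.cos (((j + 1 + k : ℤ) : ℝ) * x) := by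
    intro x
    push_cast
    rw [sub_mul ((j : ℝ) + 1), add_mul ((j : ℝ) + 1), Real.cos_sub, Real.cos_add]; ring
  simp_rw [e]
  rw [intervalIntegral.integral_add (by apply Continuous.intervalIntegrable; fun_prop)
    (by apply Continuous.intervalIntegrable; fun_prop), intervalIntegral.integral_const_mul,
    intervalIntegral.integral_const_mul, int_cos_int, int_cos_int]
  have h1 : (j + 1 + k : ℤ) ≠ 0 := by positivity
  rw [if_neg h1]
  by_cases h : j + 1 = k
  · rw [if_pos h, if_pos (by omega)]; ring
  · rw [if_neg h, if_neg (by omega)]; ring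

lemma int_sin_sin (j k : ℕ) : ∫ x in (-π)..π, Real.sin (((j : ℝ) + 1) * x) * Real.sin (k * x) =
    if j + 1 = k then π else 0 := by
  have e : ∀ x : ℝ, Real.sin (((j : ℝ) + 1) * x) * Real.sin (k * x) =
      (1 / 2) * Real.cos (((j + 1 - k : ℤ) : ℝ) * x) - (1 / 2) * Real.cos (((j + 1 + k : ℤ) : ℝ) * x) := by
    intro x
    push_cast
    rw [sub_mul ((j : ℝ) + 1), add_mul ((j : ℝ) + 1), Real.cos_sub, Real.cos_add]; ring
  simp_rw [e]
  rw [intervalIntegral.integral_sub (by apply Continuous.intervalIntegrable; fun_prop)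
    (by apply Continuous.intervalIntegrable; fun_prop), intervalIntegral.integral_const_mul,
    intervalIntegral.integral_const_mul, int_cos_int, int_cos_int]
  have h1 : (j + 1 + k : ℤ) ≠ 0 := by positivity
  rw [if_neg h1]
  by_cases h : j + 1 = k
  · rw [if_pos h, if_pos (by omega)]; ring
  · rw [if_neg h, if_neg (by omega)]; ring

lemma int_sin_cos (j k : ℕ) :
    ∫ x in (-π)..π, Real.sin (((j : ℝ) + 1) * x) * Real.cos (k * x) = 0 := by
  have e : ∀ x : ℝ, Real.sin (((j : ℝ) + 1) * x) * Real.cos (k * x) =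
      (1 / 2) * Real.sin (((j + 1 - k : ℤ) : ℝ) * x) + (1 / 2) * Real.sin (((j + 1 + k : ℤ) : ℝ) * x) := by
    intro x
    push_cast
    rw [sub_mul ((j : ℝ) + 1), add_mul ((j : ℝ) + 1), Real.sin_sub, Real.sin_add]; ring
  simp_rw [e]
  rw [intervalIntegral.integral_add (by apply Continuous.intervalIntegrable; fun_prop)
    (by apply Continuous.intervalIntegrable; fun_prop), intervalIntegral.integral_const_mul,
    intervalIntegral.integral_const_mul, int_sin_int, int_sin_int]
  simp

lemma int_cos_sin (j k : ℕ) :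
    ∫ x in (-π)..π, Real.cos (((j : ℝ) + 1) * x) * Real.sin (k * x) = 0 := by
  have e : ∀ x : ℝ, Real.cos (((j : ℝ) + 1) * x) * Real.sin (k * x) =
      (1 / 2) * Real.sin (((j + 1 + k : ℤ) : ℝ) * x) - (1 / 2) * Real.sin (((j + 1 - k : ℤ) : ℝ) * x) := by
    intro x
    push_cast
    rw [sub_mul ((j : ℝ) + 1), add_mul ((j : ℝ) + 1), Real.sin_sub, Real.sin_add]; ring
  simp_rw [e]
  rw [intervalIntegral.integral_sub (by apply Continuous.intervalIntegrable; fun_prop)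
    (by apply Continuous.intervalIntegrable; fun_prop), intervalIntegral.integral_const_mul,
    intervalIntegral.integral_const_mul, int_sin_int, int_sin_int]
  simp

/-- measurable and bounded by one on the period -/
def Good (φ : ℝ → ℝ) : Prop :=
  AEStronglyMeasurable φ (volume.restrict (Set.Ioc (-π) π)) ∧
    ∀ᵐ t ∂(volume.restrict (Set.Ioc (-π) π)), |φ t| ≤ 1

lemma uIoc_pi : Set.uIoc (-π) π = Set.Ioc (-π) π :=
  Set.uIoc_of_le (by linarith [Real.pi_pos])

lemma Good.of_bound {φ : ℝ → ℝ} (hm : Measurable φ) (h : ∀ t, |φ t| ≤ 1) : Good φ :=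
  ⟨hm.aestronglyMeasurable, Eventually.of_forall h⟩

lemma Good.intervalIntegrable_mul {φ : ℝ → ℝ} (hφ : Good φ) {g : ℝ → ℝ} (hg : Continuous g) :
    IntervalIntegrable (fun t => g t * φ t) volume (-π) π := by
  rw [intervalIntegrable_iff, uIoc_pi]
  have h1 : IntegrableOn g (Set.Ioc (-π) π) :=
    (hg.integrableOn_Icc).mono_set Set.Ioc_subset_Icc_self
  refine Integrable.mono h1 (h1.aestronglyMeasurable.mul hφ.1) ?_
  filter_upwards [hφ.2] with t ht
  rw [norm_mul, Real.norm_eq_abs (φ t)]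
  exact mul_le_of_le_one_right (norm_nonneg _) ht

lemma swap_sum {φ : ℝ → ℝ} (hφ : Good φ) {c : ℕ → ℝ} (hc : Summable c) (hc0 : ∀ j, 0 ≤ c j)
    {g : ℕ → ℝ → ℝ} (hg : ∀ j, Continuous (g j)) (M : ℝ) (hgb : ∀ j t, |g j t| ≤ M) :
    HasSum (fun j => c j * ∫ t in (-π)..π, g j t * φ t)
      (∫ t in (-π)..π, (∑' j, c j * g j t) * φ t) := by
  have hs : ∀ t, Summable (fun j => c j * g j t) := fun t => by
    refine Summable.of_norm_bounded (hc.mul_right M) (fun j => ?_)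
    rw [norm_mul, Real.norm_eq_abs, Real.norm_eq_abs, abs_of_nonneg (hc0 j)]
    exact mul_le_mul_of_nonneg_left (hgb j t) (hc0 j)
  have := intervalIntegral.hasSum_integral_of_dominated_convergence (μ := volume) (a := -π) (b := π)
    (F := fun j t => c j * (g j t * φ t)) (f := fun t => (∑' j, c j * g j t) * φ t)
    (fun j _ => c j * M) ?_ ?_ ?_ ?_ ?_
  · simpa only [intervalIntegral.integral_const_mul] using this
  · intro j
    rw [uIoc_pi]
    exact ((hg j).aestronglyMeasurable.mul hφ.1).const_mul _
  · intro j
    rw [uIoc_pi]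
    rw [← ae_restrict_iff' measurableSet_Ioc]
    filter_upwards [hφ.2] with t ht
    rw [norm_mul, norm_mul, Real.norm_eq_abs, Real.norm_eq_abs, Real.norm_eq_abs,
      abs_of_nonneg (hc0 j)]
    apply mul_le_mul_of_nonneg_left _ (hc0 j)
    calc _ ≤ |g j t| * 1 := mul_le_mul_of_nonneg_left ht (abs_nonneg _)
      _ ≤ M := by simpa using hgb j t
  · exact Eventually.of_forall fun t _ => hc.mul_right M
  · exact intervalIntegrable_const
  · refine Eventually.of_forall fun t _ => ?_
    have := ((hs t).hasSum).mul_right (φ t)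
    simpa only [mul_assoc] using this

lemma fourier_main {φ : ℝ → ℝ} (hφ : Good φ) {c : ℕ → ℝ} (hc : Summable c) (hc0 : ∀ j, 0 ≤ c j)
    (θ c0 : ℝ) {f : ℝ → ℝ}
    (hf : ∀ x, f x = c0 + (1 / π) * ∫ t in (-π)..π,
      (∑' j : ℕ, c j * Real.cos (((j : ℝ) + 1) * (x - t) - θ)) * φ t) (m : ℕ) (x : ℝ) :
    f x - fourierSum m f x = (1 / π) * ∫ t in (-π)..π,
      (∑' j : ℕ, c (j + m) * Real.cos ((((j + m : ℕ) : ℝ) + 1) * (x - t) - θ)) * φ t := by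
  have hpi := Real.pi_pos
  set p : ℕ → ℝ := fun j => ∫ t in (-π)..π, Real.cos (((j : ℝ) + 1) * t + θ) * φ t with hp
  set q : ℕ → ℝ := fun j => ∫ t in (-π)..π, Real.sin (((j : ℝ) + 1) * t + θ) * φ t with hq
  have hb : ∀ (g : ℝ → ℝ), (∀ t, |g t| ≤ 1) → |∫ t in (-π)..π, g t * φ t| ≤ 2 * π := by
    intro g hg
    have := intervalIntegral.norm_integral_le_of_norm_le_const_ae (a := -π) (b := π) (C := 1)
      (f := fun t => g t * φ t) ?_
    · rw [Real.norm_eq_abs] at this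
      refine this.trans ?_
      rw [abs_of_pos] <;> linarith
    · rw [uIoc_pi, ← ae_restrict_iff' measurableSet_Ioc]
      filter_upwards [hφ.2] with t ht
      rw [norm_mul]
      exact mul_le_one₀ (hg t) (norm_nonneg _) ht
  have hpb : ∀ j, |p j| ≤ 2 * π := fun j => hb _ (fun t => Real.abs_cos_le_one _)
  have hqb : ∀ j, |q j| ≤ 2 * π := fun j => hb _ (fun t => Real.abs_sin_le_one _)
  have hI : ∀ j : ℕ, ∀ x, ∫ t in (-π)..π, Real.cos (((j : ℝ) + 1) * (x - t) - θ) * φ t =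
      p j * Real.cos (((j : ℝ) + 1) * x) + q j * Real.sin (((j : ℝ) + 1) * x) := by
    intro j x
    have e : ∀ t, Real.cos (((j : ℝ) + 1) * (x - t) - θ) * φ t =
        Real.cos (((j : ℝ) + 1) * x) * (Real.cos (((j : ℝ) + 1) * t + θ) * φ t) +
        Real.sin (((j : ℝ) + 1) * x) * (Real.sin (((j : ℝ) + 1) * t + θ) * φ t) := by
      intro t
      have : ((j : ℝ) + 1) * (x - t) - θ = ((j : ℝ) + 1) * x - (((j : ℝ) + 1) * t + θ) := by ring
      rw [this, Real.cos_sub]; ring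
    simp_rw [e]
    rw [intervalIntegral.integral_add, intervalIntegral.integral_const_mul,
      intervalIntegral.integral_const_mul]
    · simp only [hp, hq]; ring
    · exact (hφ.intervalIntegrable_mul (by fun_prop)).const_mul _
    · exact (hφ.intervalIntegrable_mul (by fun_prop)).const_mul _
  set u : ℕ → ℝ → ℝ := fun j x =>
    p j * Real.cos (((j : ℝ) + 1) * x) + q j * Real.sin (((j : ℝ) + 1) * x) with hu
  have huc : ∀ j, Continuous (u j) := fun j => by simp only [hu]; fun_prop
  have hub : ∀ j x, |u j x| ≤ 4 * π := by
    intro j x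
    refine (abs_add_le _ _).trans ?_
    rw [abs_mul, abs_mul]
    have h1 := mul_le_mul (hpb j) (Real.abs_cos_le_one (((j : ℝ) + 1) * x)) (abs_nonneg _) (by positivity)
    have h2 := mul_le_mul (hqb j) (Real.abs_sin_le_one (((j : ℝ) + 1) * x)) (abs_nonneg _) (by positivity)
    linarith
  have hsum : ∀ x, HasSum (fun j => c j * u j x) (∫ t in (-π)..π,
      (∑' j : ℕ, c j * Real.cos (((j : ℝ) + 1) * (x - t) - θ)) * φ t) := by
    intro x
    have := swap_sum hφ hc hc0 (g := fun (j : ℕ) t => Real.cos (((j : ℝ) + 1) * (x - t) - θ))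
      (fun j => by fun_prop) 1 (fun j t => Real.abs_cos_le_one _)
    simpa only [hI] using this
  have hf' : ∀ x, f x = c0 + (1 / π) * ∑' j, c j * u j x := fun x => by
    rw [hf, (hsum x).tsum_eq]
  have hGc : Continuous (fun x => ∑' j, c j * u j x) := by
    refine continuous_tsum (fun j => (huc j).const_mul _) (hc.mul_right (4 * π)) (fun j x => ?_)
    rw [norm_mul, Real.norm_eq_abs, Real.norm_eq_abs, abs_of_nonneg (hc0 j)]
    exact mul_le_mul_of_nonneg_left (hub j x) (hc0 j)
  -- integrals against a test function
  have htest : ∀ ψ : ℝ → ℝ, Continuous ψ → (∀ t, |ψ t| ≤ 1) →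
      ∫ t in (-π)..π, f t * ψ t = c0 * (∫ t in (-π)..π, ψ t) +
        (1 / π) * ∑' j, c j * ∫ t in (-π)..π, u j t * ψ t := by
    intro ψ hψ hψb
    have hG : Good ψ := Good.of_bound hψ.measurable hψb
    rw [(swap_sum hG hc hc0 huc (4 * π) hub).tsum_eq]
    have : ∀ t, f t * ψ t = c0 * ψ t + (1 / π) * ((∑' j, c j * u j t) * ψ t) := by
      intro t; rw [hf' t]; ring
    simp_rw [this]
    rw [intervalIntegral.integral_add, intervalIntegral.integral_const_mul,
      intervalIntegral.integral_const_mul]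
    · exact (hψ.intervalIntegrable _ _).const_mul _
    · exact (hG.intervalIntegrable_mul hGc).const_mul _
  have hA : ∀ k : ℕ, ∀ j, ∫ t in (-π)..π, u j t * Real.cos (k * t) = if j + 1 = k then p j * π else 0 := by
    intro k j
    have e : ∀ t, u j t * Real.cos (k * t) = p j * (Real.cos (((j : ℝ) + 1) * t) * Real.cos (k * t)) +
      q j * (Real.sin (((j : ℝ) + 1) * t) * Real.cos (k * t)) := fun t => by simp only [hu]; ring
    simp_rw [e]
    rw [intervalIntegral.integral_add (by apply Continuous.intervalIntegrable; fun_prop)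
      (by apply Continuous.intervalIntegrable; fun_prop), intervalIntegral.integral_const_mul,
      intervalIntegral.integral_const_mul, int_cos_cos, int_sin_cos]
    simp
  have hB : ∀ k : ℕ, ∀ j, ∫ t in (-π)..π, u j t * Real.sin (k * t) = if j + 1 = k then q j * π else 0 := by
    intro k j
    have e : ∀ t, u j t * Real.sin (k * t) = p j * (Real.cos (((j : ℝ) + 1) * t) * Real.sin (k * t)) +
      q j * (Real.sin (((j : ℝ) + 1) * t) * Real.sin (k * t)) := fun t => by simp only [hu]; ring
    simp_rw [e]
    rw [intervalIntegral.integral_add (by apply Continuous.intervalIntegrable; fun_prop)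
      (by apply Continuous.intervalIntegrable; fun_prop), intervalIntegral.integral_const_mul,
      intervalIntegral.integral_const_mul, int_cos_sin, int_sin_sin]
    simp
  have hA0 : fourierCoefA f 0 = 2 * c0 := by
    unfold fourierCoefA
    rw [htest _ (by fun_prop) (fun t => Real.abs_cos_le_one _)]
    simp_rw [hA 0]
    simp
    field_simp
    ring
  have hAk : ∀ j : ℕ, fourierCoefA f (j + 1) = (1 / π) * (c j * p j) := by
    intro j
    unfold fourierCoefA
    rw [htest _ (by fun_prop) (fun t => Real.abs_cos_le_one _)]
    simp_rw [hA (j + 1)]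
    have h0 := int_cos_int (j + 1 : ℤ)
    rw [if_neg (by positivity)] at h0
    push_cast at h0 ⊢
    rw [h0]
    rw [tsum_eq_single j (by intro b hb; simp [hb])]
    simp
    field_simp
  have hBk : ∀ j : ℕ, fourierCoefB f (j + 1) = (1 / π) * (c j * q j) := by
    intro j
    unfold fourierCoefB
    rw [htest _ (by fun_prop) (fun t => Real.abs_sin_le_one _)]
    simp_rw [hB (j + 1)]
    have h0 := int_sin_int (j + 1 : ℤ)
    push_cast at h0 ⊢
    rw [h0]
    rw [tsum_eq_single j (by intro b hb; simp [hb])]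
    simp
    field_simp
  have hS : fourierSum m f x = c0 + (1 / π) * ∑ j ∈ Finset.range m, c j * u j x := by
    unfold fourierSum
    rw [hA0, Finset.range_eq_Ico, Finset.mul_sum]
    congr 1
    · ring
    · have : Finset.Icc 1 m = Finset.Ico (0 + 1) (m + 1) := by ext; simp
      rw [this, ← Finset.sum_Ico_add']
      refine Finset.sum_congr rfl fun j _ => ?_
      rw [hAk, hBk]; simp only [hu]; push_cast; ring
  have htail := swap_sum hφ ((summable_nat_add_iff m).2 hc) (fun j => hc0 _)
      (g := fun (j : ℕ) t => Real.cos ((((j + m : ℕ) : ℝ) + 1) * (x - t) - θ))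
      (fun j => by fun_prop) 1 (fun j t => Real.abs_cos_le_one _)
  rw [← htail.tsum_eq, hS, hf' x]
  simp_rw [hI]
  have := (hsum x).summable.sum_add_tsum_nat_add m
  rw [← this]
  simp only [hu]
  ring


lemma lam_bound {α r : ℝ} (hα : 0 < α) (hr0 : 0 < r) {n : ℕ} (hn : 1 ≤ n)
    (hx : 2 ≤ α * r * (n : ℝ) ^ (r - 1) * n) (j : ℕ) :
    Real.exp (-α * ((n : ℝ) + j) ^ r) ≤
      Real.exp (-α * (n : ℝ) ^ r) * (1 / (1 + (α * r * (n : ℝ) ^ (r - 1) / 2) * j) ^ 2) := by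
  have hn0 : (0 : ℝ) < n := by exact_mod_cast hn
  set y := α * r * (n : ℝ) ^ (r - 1) with hy
  have hy0 : 0 < y := by positivity
  set u : ℝ := j / n with hu
  have hu0 : 0 ≤ u := by positivity
  have e1 : ((n : ℝ) + j) ^ r = (n : ℝ) ^ r * (1 + u) ^ r := by
    rw [← Real.mul_rpow hn0.le (by positivity)]; congr 1; rw [hu]; field_simp
  have h1 : 1 + r * Real.log (1 + u) ≤ (1 + u) ^ r := by
    rw [Real.rpow_def_of_pos (by positivity)]
    linarith [Real.add_one_le_exp (Real.log (1 + u) * r)]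
  have ex : α * (n : ℝ) ^ r * r = y * n := by
    rw [hy, mul_assoc (α * r), ← Real.rpow_add_one hn0.ne']; ring_nf
  have h2 : -α * ((n : ℝ) + j) ^ r ≤ -α * (n : ℝ) ^ r + -(y * n * Real.log (1 + u)) := by
    rw [e1]
    have : α * (n : ℝ) ^ r * (1 + r * Real.log (1 + u)) ≤ α * (n : ℝ) ^ r * (1 + u) ^ r := by gcongr
    rw [mul_add, mul_one, ← mul_assoc, ex] at this
    linarith
  have h3 : 1 + (y / 2) * j ≤ (1 + u) ^ (y * n / 2) := by
    have := one_add_mul_self_le_rpow_one_add (s := u) (by linarith) (p := y * n / 2) (by linarith)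
    refine le_trans (le_of_eq ?_) this
    rw [hu]; field_simp
  have h4 : Real.exp (-(y * n * Real.log (1 + u))) ≤ 1 / (1 + (y / 2) * j) ^ 2 := by
    rw [Real.exp_neg, ← one_div]
    apply one_div_le_one_div_of_le (by positivity)
    have : Real.exp (y * n * Real.log (1 + u)) = ((1 + u) ^ (y * n / 2)) ^ 2 := by
      rw [Real.rpow_def_of_pos (by positivity), ← Real.exp_nat_mul]; congr 1; push_cast; ring
    rw [this]
    gcongr
  calc _ ≤ Real.exp (-α * (n : ℝ) ^ r + -(y * n * Real.log (1 + u))) := Real.exp_le_exp.2 h2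
    _ = Real.exp (-α * (n : ℝ) ^ r) * Real.exp (-(y * n * Real.log (1 + u))) := Real.exp_add _ _
    _ ≤ _ := by gcongr

lemma tele_sum {c : ℝ} (hc : 0 < c) (m : ℕ) :
    ∑ j ∈ Finset.range m, 1 / (1 + c * (j : ℝ)) ^ 2 ≤ 1 + 1 / c := by
  have key : ∀ j : ℕ, 1 / (1 + c * (j : ℝ)) ^ 2 ≤
      (1 + 1 / c) * (1 / (1 + c * (j : ℝ)) - 1 / (1 + c * ((j + 1 : ℕ) : ℝ))) := by
    intro j
    push_cast
    have h1 : 0 < 1 + c * (j : ℝ) := by positivity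
    have h2 : 0 < 1 + c * ((j : ℝ) + 1) := by positivity
    have : (1 + 1 / c) * (1 / (1 + c * (j : ℝ)) - 1 / (1 + c * ((j : ℝ) + 1))) =
        (1 + c) / ((1 + c * (j : ℝ)) * (1 + c * ((j : ℝ) + 1))) := by
      field_simp; ring
    rw [this, div_le_div_iff₀ (by positivity) (by positivity)]
    have : 0 ≤ c * c * (j : ℝ) := by positivity
    nlinarith [mul_nonneg h1.le this]
  calc _ ≤ ∑ j ∈ Finset.range m, (1 + 1 / c) *
        (1 / (1 + c * (j : ℝ)) - 1 / (1 + c * ((j + 1 : ℕ) : ℝ))) :=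
        Finset.sum_le_sum fun j _ => key j
    _ = (1 + 1 / c) * (1 - 1 / (1 + c * (m : ℝ))) := by
        rw [← Finset.mul_sum, Finset.sum_range_sub' (fun j : ℕ => 1 / (1 + c * (j : ℝ)))]; simp
    _ ≤ (1 + 1 / c) * 1 := by
        gcongr
        have : 0 ≤ 1 / (1 + c * (m : ℝ)) := by positivity
        linarith
    _ = _ := by ring

lemma lam_summable {α r : ℝ} (hα : 0 < α) (hr0 : 0 < r) {n : ℕ} (hn : 1 ≤ n)
    (hx : 2 ≤ α * r * (n : ℝ) ^ (r - 1) * n) (hy1 : α * r * (n : ℝ) ^ (r - 1) ≤ 1) :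
    Summable (fun j : ℕ => Real.exp (-α * ((n : ℝ) + j) ^ r)) ∧
    ∑' j : ℕ, Real.exp (-α * ((n : ℝ) + j) ^ r) ≤
      Real.exp (-α * (n : ℝ) ^ r) * (3 / (α * r * (n : ℝ) ^ (r - 1))) := by
  have hn0 : (0 : ℝ) < n := by exact_mod_cast hn
  have hb := lam_bound hα hr0 hn hx
  set y := α * r * (n : ℝ) ^ (r - 1) with hy
  have hy0 : 0 < y := by positivity
  have hpart : ∀ m, ∑ j ∈ Finset.range m, Real.exp (-α * ((n : ℝ) + j) ^ r) ≤
      Real.exp (-α * (n : ℝ) ^ r) * (3 / y) := by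
    intro m
    refine (Finset.sum_le_sum fun j _ => hb j).trans ?_
    rw [← Finset.mul_sum]
    gcongr
    refine (tele_sum (half_pos hy0) m).trans ?_
    have : 1 ≤ 1 / y := by rw [le_div_iff₀ hy0]; linarith
    have e : 1 / (y / 2) = 2 * (1 / y) := by field_simp
    have e' : 3 / y = 3 * (1 / y) := by ring
    rw [e, e']; linarith
  have hs := summable_of_sum_range_le (fun j => (Real.exp_pos _).le) hpart
  exact ⟨hs, Real.tsum_le_of_sum_range_le (fun j => (Real.exp_pos _).le) hpart⟩

lemma abel1 {c : ℕ → ℝ} (hc : Summable c) (hc0 : ∀ j, 0 ≤ c j) {z : ℂ} (hz : ‖z‖ ≤ 1) :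
    (1 - z) * ∑' j, (c j : ℂ) * z ^ j = c 0 - z * ∑' j, ((c j - c (j + 1) : ℝ) : ℂ) * z ^ j := by
  have hs : Summable (fun j => (c j : ℂ) * z ^ j) := by
    refine Summable.of_norm_bounded hc (fun j => ?_)
    rw [norm_mul, norm_pow, Complex.norm_real, Real.norm_eq_abs, abs_of_nonneg (hc0 j)]
    exact mul_le_of_le_one_right (hc0 j) (pow_le_one₀ (norm_nonneg _) hz)
  have hs1 : Summable (fun j => (c (j + 1) : ℂ) * z ^ j) := by
    refine Summable.of_norm_bounded ((summable_nat_add_iff 1).2 hc) (fun j => ?_)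
    rw [norm_mul, norm_pow, Complex.norm_real, Real.norm_eq_abs, abs_of_nonneg (hc0 _)]
    exact mul_le_of_le_one_right (hc0 _) (pow_le_one₀ (norm_nonneg _) hz)
  have h1 : ∑' j, (c j : ℂ) * z ^ j = c 0 + z * ∑' j, (c (j + 1) : ℂ) * z ^ j := by
    rw [hs.tsum_eq_zero_add, ← tsum_mul_left]
    simp only [pow_zero, mul_one]
    congr 1
    exact tsum_congr fun j => by rw [pow_succ]; ring
  have h2 : ∑' j, ((c j - c (j + 1) : ℝ) : ℂ) * z ^ j =
      ∑' j, (c j : ℂ) * z ^ j - ∑' j, (c (j + 1) : ℂ) * z ^ j := by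
    rw [← hs.tsum_sub hs1]
    exact tsum_congr fun j => by push_cast; ring
  rw [h2]
  linear_combination h1

lemma abel2 {c : ℕ → ℝ} (hc : Summable c) (hc0 : ∀ j, 0 ≤ c j) (ha : ∀ j, c (j + 1) ≤ c j)
    {z : ℂ} (hz : ‖z‖ ≤ 1) :
    ‖(1 - z) * ∑' j, (c j : ℂ) * z ^ j‖ ≤ 2 * c 0 := by
  rw [abel1 hc hc0 hz]
  have hd : HasSum (fun j => c j - c (j + 1)) (c 0) := by
    have := HasSum.sub hc.hasSum ((summable_nat_add_iff 1).2 hc).hasSum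
    rw [hc.tsum_eq_zero_add] at this
    simpa using this
  have h1 : ‖∑' j, ((c j - c (j + 1) : ℝ) : ℂ) * z ^ j‖ ≤ c 0 := by
    refine tsum_of_norm_bounded hd (fun j => ?_)
    have : 0 ≤ c j - c (j + 1) := by linarith [ha j]
    rw [norm_mul, norm_pow, Complex.norm_real, Real.norm_eq_abs, abs_of_nonneg this]
    exact mul_le_of_le_one_right this (pow_le_one₀ (norm_nonneg _) hz)
  calc _ ≤ ‖(c 0 : ℂ)‖ + ‖z * ∑' j, ((c j - c (j + 1) : ℝ) : ℂ) * z ^ j‖ := norm_sub_le _ _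
    _ ≤ c 0 + c 0 := by
      gcongr
      · rw [Complex.norm_real, Real.norm_eq_abs, abs_of_nonneg (hc0 0)]
      · rw [norm_mul]
        exact (mul_le_of_le_one_left (norm_nonneg _) hz).trans h1
    _ = _ := by ring

lemma ker_re {c : ℕ → ℝ} (hc : Summable c) (hc0 : ∀ j, 0 ≤ c j) (n t θ : ℝ) :
    ∑' j : ℕ, c j * Real.cos ((n + j) * t - θ) =
      (Complex.exp (Complex.I * ((n * t - θ : ℝ) : ℂ)) *
        ∑' j, (c j : ℂ) * (Complex.exp (Complex.I * t)) ^ j).re := by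
  have hz : ‖Complex.exp (Complex.I * t)‖ = 1 := Complex.norm_exp_I_mul_ofReal t
  have hs : Summable (fun j => (c j : ℂ) * (Complex.exp (Complex.I * t)) ^ j) := by
    refine Summable.of_norm_bounded hc (fun j => ?_)
    rw [norm_mul, norm_pow, Complex.norm_real, Real.norm_eq_abs, abs_of_nonneg (hc0 j), hz]
    simp
  rw [← tsum_mul_left, Complex.re_tsum (hs.mul_left _)]
  refine tsum_congr fun j => ?_
  rw [← Complex.exp_nat_mul]
  have : Complex.exp (Complex.I * ((n * t - θ : ℝ) : ℂ)) * ((c j : ℂ) * Complex.exp (j * (Complex.I * t)))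
     = (c j : ℂ) * Complex.exp ((((n + j) * t - θ : ℝ) : ℂ) * Complex.I) := by
    rw [mul_left_comm, ← Complex.exp_add]; congr 2; push_cast; ring
  rw [this, Complex.re_ofReal_mul, Complex.exp_ofReal_mul_I_re]

lemma ker_est {c : ℕ → ℝ} (hc : Summable c) (hc0 : ∀ j, 0 ≤ c j) (ha : ∀ j, c (j + 1) ≤ c j)
    (hconv : ∀ j, c (j + 1) - c (j + 2) ≤ c j - c (j + 1)) {y : ℝ} (hy0 : 0 < y)
    (hy : c 0 - c 1 ≤ c 0 * y) (n θ : ℝ) {t : ℝ} (ht0 : 0 < t) (ht : t ≤ π) :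
    |∑' j : ℕ, c j * Real.cos ((n + j) * t - θ) + c 0 * (Real.sin ((n - 1 / 2) * t - θ) / t)| ≤
      c 0 * (π ^ 2 * y / 2 * (1 / t ^ 2) + 1) := by
  have hpi := Real.pi_pos
  set s := Real.sin (t / 2) with hs
  have hs1 : t / π ≤ s := by
    have := Real.mul_le_sin (x := t / 2) (by linarith) (by linarith)
    calc t / π = 2 / π * (t / 2) := by ring
      _ ≤ s := this
  have hs0 : 0 < s := lt_of_lt_of_le (by positivity) hs1
  have hs2 : t / 2 - (t / 2) ^ 3 / 6 ≤ s := (Real.sin_gt_sub_cube (by linarith)).le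
  have hs3 : s ≤ t / 2 := Real.sin_le (by linarith)
  -- step 1 : replace 1/(2 sin)
  have hd : |1 / (2 * s) - 1 / t| ≤ 1 := by
    have h1 : 1 / (2 * s) - 1 / t = (t - 2 * s) / (2 * s * t) := by field_simp
    rw [h1, abs_of_nonneg (by apply div_nonneg; linarith; positivity), div_le_one (by positivity)]
    have h3 : t - 2 * s ≤ t ^ 3 / 24 := by nlinarith
    have h4 : t ^ 3 / 24 ≤ 2 * (t / π) * t := by
      have : t * π ≤ 48 := by nlinarith [Real.pi_lt_four]
      rw [show 2 * (t / π) * t = t ^ 2 * (2 / π) by ring, show t ^ 3 / 24 = t ^ 2 * (t / 24) by ring]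
      have h6 : t / 24 ≤ 2 / π := by rw [div_le_div_iff₀ (by norm_num) hpi]; linarith
      exact mul_le_mul_of_nonneg_left h6 (sq_nonneg _)
    have h5 : 2 * (t / π) * t ≤ 2 * s * t := by gcongr
    linarith
  set z := Complex.exp (Complex.I * t) with hz
  have hzn : ‖z‖ = 1 := Complex.norm_exp_I_mul_ofReal t
  have hz1 : ‖1 - z‖ = 2 * s := by
    rw [norm_sub_rev, Complex.norm_exp_I_mul_ofReal_sub_one, Real.norm_eq_abs, abs_of_nonneg (by positivity)]
  have hzne : 1 - z ≠ 0 := by rw [← norm_ne_zero_iff, hz1]; positivity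
  set L := ∑' j, (c j : ℂ) * z ^ j with hL
  set D := ∑' j, ((c j - c (j + 1) : ℝ) : ℂ) * z ^ j with hD
  have hds : Summable (fun j => c j - c (j + 1)) := hc.sub ((summable_nat_add_iff 1).2 hc)
  have hA1 : (1 - z) * L = c 0 - z * D := abel1 hc hc0 hzn.le
  have hA2 : ‖(1 - z) * D‖ ≤ 2 * (c 0 - c 1) :=
    abel2 hds (fun j => by linarith [ha j]) hconv hzn.le
  have hLd : ‖L - c 0 / (1 - z)‖ ≤ π ^ 2 * (c 0 * y) / 2 * (1 / t ^ 2) := by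
    have e : L - c 0 / (1 - z) = -(z * ((1 - z) * D)) / (1 - z) ^ 2 := by
      field_simp
      linear_combination hA1
    rw [e, norm_div, norm_neg, norm_mul, hzn, one_mul, norm_pow, hz1]
    have h4 : (2 * (t / π)) ^ 2 ≤ (2 * s) ^ 2 := by gcongr
    calc _ ≤ (2 * (c 0 * y)) / (2 * (t / π)) ^ 2 := by
          apply div_le_div₀ _ _ (by positivity) h4
          · have := hc0 0; positivity
          · linarith
      _ = _ := by field_simp
  set w := Complex.exp (Complex.I * ((n * t - θ : ℝ) : ℂ)) with hw
  have hwn : ‖w‖ = 1 := Complex.norm_exp_I_mul_ofReal _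
  have hmain : (w * (1 / (1 - z))).re = -Real.sin ((n - 1 / 2) * t - θ) / (2 * s) := by
    have e1 : 1 - z = -(2 * s * Complex.I) * Complex.exp (Complex.I * (t / 2 : ℝ)) := by
      have hz' : z = Complex.exp (Complex.I * (t / 2 : ℝ)) * Complex.exp (Complex.I * (t / 2 : ℝ)) := by
        rw [← Complex.exp_add, hz]; congr 1; push_cast; ring
      have hone : (1 : ℂ) = Complex.exp (-(Complex.I * (t / 2 : ℝ))) * Complex.exp (Complex.I * (t / 2 : ℝ)) := by
        rw [← Complex.exp_add]; simp
      have hsin : (s : ℂ) = (Complex.exp (-(Complex.I * (t / 2 : ℝ))) - Complex.exp (Complex.I * (t / 2 : ℝ))) * Complex.I / 2 := by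
        rw [hs, Complex.ofReal_sin, Complex.sin]
        congr 4 <;> ring
      rw [hsin]
      have hI := Complex.I_mul_I
      conv_lhs => rw [hone, hz']
      linear_combination (Complex.exp (-(Complex.I * (t / 2 : ℝ))) - Complex.exp (Complex.I * (t / 2 : ℝ))) * Complex.exp (Complex.I * (t / 2 : ℝ)) * hI
    have e2 : w = Complex.exp ((((n - 1 / 2) * t - θ : ℝ) : ℂ) * Complex.I) * Complex.exp (Complex.I * (t / 2 : ℝ)) := by
      rw [← Complex.exp_add, hw]; congr 1; push_cast; ring
    have hsc : (s : ℂ) ≠ 0 := by exact_mod_cast hs0.ne'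
    have e3 : w * (1 / (1 - z)) = ((1 / (2 * s) : ℝ) : ℂ) * (Complex.I *
        Complex.exp ((((n - 1 / 2) * t - θ : ℝ) : ℂ) * Complex.I)) := by
      rw [mul_one_div, div_eq_iff hzne, e1, e2]
      push_cast
      field_simp
      linear_combination Complex.I_sq
    rw [e3, Complex.re_ofReal_mul, Complex.mul_re, Complex.exp_ofReal_mul_I_im]
    simp
    ring
  rw [ker_re hc hc0 n t θ]
  set S := Real.sin ((n - 1 / 2) * t - θ) with hS
  have e : (w * L).re + c 0 * (S / t) =
      (w * (L - c 0 / (1 - z))).re + -(c 0 * (S * (1 / (2 * s) - 1 / t))) := by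
    have : w * L = w * (L - c 0 / (1 - z)) + (c 0 : ℂ) * (w * (1 / (1 - z))) := by ring
    rw [this, Complex.add_re, Complex.re_ofReal_mul, hmain]; ring
  rw [e]
  have b1 : |(w * (L - c 0 / (1 - z))).re| ≤ π ^ 2 * (c 0 * y) / 2 * (1 / t ^ 2) := by
    refine (Complex.abs_re_le_norm _).trans ?_
    rw [norm_mul, hwn, one_mul]; exact hLd
  have b2 : |-(c 0 * (S * (1 / (2 * s) - 1 / t)))| ≤ c 0 := by
    rw [abs_neg, abs_mul, abs_of_nonneg (hc0 0), abs_mul]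
    exact mul_le_of_le_one_right (hc0 0) (mul_le_one₀ (Real.abs_sin_le_one _) (abs_nonneg _) hd)
  calc _ ≤ _ := abs_add_le _ _
    _ ≤ π ^ 2 * (c 0 * y) / 2 * (1 / t ^ 2) + c 0 := add_le_add b1 b2
    _ = _ := by ring


lemma pow_summable {c a : ℕ → ℝ} (hc : Summable c) (h : ∀ k, |a k| ≤ c k) {z : ℂ} (hz : ‖z‖ ≤ 1) :
    Summable (fun j => (a j : ℂ) * z ^ j) ∧ ‖∑' j, (a j : ℂ) * z ^ j‖ ≤ ∑' j, c j := by
  have hb : ∀ j, ‖(a j : ℂ) * z ^ j‖ ≤ c j := by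
    intro j
    rw [norm_mul, norm_pow, Complex.norm_real, Real.norm_eq_abs]
    exact (mul_le_of_le_one_right (abs_nonneg _) (pow_le_one₀ (norm_nonneg _) hz)).trans (h j)
  exact ⟨Summable.of_norm_bounded hc hb, tsum_of_norm_bounded hc.hasSum hb⟩

lemma euler_step {c a : ℕ → ℝ} (hc : Summable c) (h : ∀ k, |a k| ≤ c k) {z : ℂ} (hz : ‖z‖ ≤ 1) :
    (2 - z) * ∑' j, (a j : ℂ) * z ^ j = 2 * a 0 + z * ∑' j, ((tS a j : ℝ) : ℂ) * z ^ j := by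
  have hs := (pow_summable hc h hz).1
  have hs1 : Summable (fun j => (a (j + 1) : ℂ) * z ^ j) :=
    (pow_summable ((summable_nat_add_iff 1).2 hc) (fun k => h (k + 1)) hz).1
  have h1 : ∑' j, (a j : ℂ) * z ^ j = a 0 + z * ∑' j, (a (j + 1) : ℂ) * z ^ j := by
    rw [hs.tsum_eq_zero_add, ← tsum_mul_left]
    simp only [pow_zero, mul_one]
    congr 1
    exact tsum_congr fun j => by rw [pow_succ]; ring
  have h2 : ∑' j, ((tS a j : ℝ) : ℂ) * z ^ j =
      2 * ∑' j, (a (j + 1) : ℂ) * z ^ j - ∑' j, (a j : ℂ) * z ^ j := by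
    rw [← tsum_mul_left, ← (hs1.mul_left 2).tsum_sub hs]
    exact tsum_congr fun j => by simp only [tS]; push_cast; ring
  rw [h2]
  linear_combination 2 * h1

lemma euler_fin {c : ℕ → ℝ} (hc : Summable c) (hcm : CMs c) {z : ℂ} (hz : ‖z‖ ≤ 1)
    (hz2 : 2 - z ≠ 0) (M : ℕ) :
    ∑' j, (c j : ℂ) * z ^ j = (2 / (2 - z)) * ∑ m ∈ Finset.range M, (((tS^[m] c) 0 : ℝ) : ℂ) * (z / (2 - z)) ^ m
      + (z / (2 - z)) ^ M * ∑' j, (((tS^[M] c) j : ℝ) : ℂ) * z ^ j := by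
  induction M with
  | zero => simp
  | succ M ih =>
    rw [ih, Finset.sum_range_succ, Function.iterate_succ_apply']
    have := euler_step hc (CMs.tS_bound M c hcm) hz
    have e : ∑' j, (((tS^[M] c) j : ℝ) : ℂ) * z ^ j = (2 / (2 - z)) * ((tS^[M] c) 0 : ℝ) +
       (z / (2 - z)) * ∑' j, ((tS (tS^[M] c) j : ℝ) : ℂ) * z ^ j := by
      field_simp
      linear_combination this
    rw [e, pow_succ]; ring

/-- Continuation. -/
noncomputable def Gf (c : ℕ → ℝ) (w : ℂ) : ℂ := ∑' m : ℕ, (((tS^[m] c) 0 : ℝ) : ℂ) * w ^ m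

lemma Gf_summable {c : ℕ → ℝ} (hcm : CMs c) {w : ℂ} (hw : ‖w‖ < 1) :
    Summable (fun m : ℕ => (((tS^[m] c) 0 : ℝ) : ℂ) * w ^ m) := by
  refine Summable.of_norm_bounded ((summable_geometric_of_lt_one (norm_nonneg w) hw).mul_left (c 0)) ?_
  intro m
  rw [norm_mul, norm_pow, Complex.norm_real, Real.norm_eq_abs]
  exact mul_le_mul_of_nonneg_right (CMs.tS_bound m c hcm 0) (by positivity)

lemma euler_inf {c : ℕ → ℝ} (hc : Summable c) (hcm : CMs c) {z : ℂ} (hz : ‖z‖ ≤ 1)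
    (hz2 : ‖z‖ < ‖2 - z‖) :
    ∑' j, (c j : ℂ) * z ^ j = (2 / (2 - z)) * Gf c (z / (2 - z)) := by
  have hne : 2 - z ≠ 0 := by
    rw [← norm_pos_iff]; exact lt_of_le_of_lt (norm_nonneg _) hz2
  have hw : ‖z / (2 - z)‖ < 1 := by
    rw [norm_div, div_lt_one (norm_pos_iff.2 hne)]; exact hz2
  have h1 := ((Gf_summable hcm hw).hasSum.tendsto_sum_nat).const_mul (2 / (2 - z))
  have h2 : Tendsto (fun M => (z / (2 - z)) ^ M * ∑' j, (((tS^[M] c) j : ℝ) : ℂ) * z ^ j) atTop (nhds 0) := by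
    have hg := (tendsto_pow_atTop_nhds_zero_of_lt_one (norm_nonneg _) hw).mul_const (∑' j, c j)
    rw [zero_mul] at hg
    refine squeeze_zero_norm (fun M => ?_) hg
    rw [norm_mul, norm_pow]
    exact mul_le_mul_of_nonneg_left (pow_summable hc (CMs.tS_bound M c hcm) hz).2 (by positivity)
  have h3 := h1.add h2
  simp_rw [← euler_fin hc hcm hz hne] at h3
  rw [add_zero] at h3
  exact tendsto_nhds_unique tendsto_const_nhds h3

lemma Gf_analytic {c : ℕ → ℝ} (hcm : CMs c) : AnalyticOnNhd ℂ (Gf c) (Metric.ball 0 1) := by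
  apply DifferentiableOn.analyticOnNhd _ Metric.isOpen_ball
  intro w hw
  rw [mem_ball_zero_iff] at hw
  obtain ⟨ρ, h1, h2⟩ := exists_between hw
  have hρ0 : 0 ≤ ρ := (norm_nonneg w).trans h1.le
  have : DifferentiableOn ℂ (Gf c) (Metric.ball 0 ρ) := by
    refine Complex.differentiableOn_tsum_of_summable_norm (u := fun m => c 0 * ρ ^ m)
      ((summable_geometric_of_lt_one hρ0 h2).mul_left _) ?_ Metric.isOpen_ball ?_
    · intro m; fun_prop
    · intro m v hv
      rw [mem_ball_zero_iff] at hv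
      rw [norm_mul, norm_pow, Complex.norm_real, Real.norm_eq_abs]
      have h0 := CMs.tS_bound m c hcm 0
      exact mul_le_mul h0 (by gcongr) (by positivity) ((abs_nonneg _).trans h0)
  exact (this.differentiableAt (Metric.isOpen_ball.mem_nhds (by simpa using h1))).differentiableWithinAt

lemma norm_lt_of {t : ℝ} (k : ℤ) (ht : t ∈ Set.Ioo (2 * π * k) (2 * π * k + 2 * π)) :
    ‖Complex.exp (Complex.I * t)‖ < ‖2 - Complex.exp (Complex.I * t)‖ := by
  have hcos : Real.cos t < 1 := by
    refine lt_of_le_of_ne (Real.cos_le_one t) fun h => ?_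
    rw [Real.cos_eq_one_iff] at h
    obtain ⟨m, hm⟩ := h
    have hpi := Real.pi_pos
    have h1 : (k : ℝ) < m := by nlinarith [ht.1]
    have h2 : (m : ℝ) < k + 1 := by nlinarith [ht.2]
    have h1' : k < m := by exact_mod_cast h1
    have h2' : m < k + 1 := by exact_mod_cast h2
    omega
  rw [← sq_lt_sq₀ (norm_nonneg _) (norm_nonneg _)]
  rw [← Complex.normSq_eq_norm_sq, ← Complex.normSq_eq_norm_sq, mul_comm, Complex.normSq_apply, Complex.normSq_apply]
  simp only [Complex.sub_re, Complex.sub_im, Complex.exp_ofReal_mul_I_re, Complex.exp_ofReal_mul_I_im]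
  norm_num
  nlinarith

lemma ker_analytic {c : ℕ → ℝ} (hc : Summable c) (hcm : CMs c) (θ : ℝ) (k : ℤ) :
    AnalyticOnNhd ℝ (fun t : ℝ => ∑' j : ℕ, c j * Real.cos ((1 + j) * t - θ))
      (Set.Ioo (2 * π * k) (2 * π * k + 2 * π)) := by
  have hc0 : ∀ j, 0 ≤ c j := fun j => hcm 0 j
  set H : ℝ → ℂ := fun t => Complex.exp (Complex.I * ((1 * t - θ : ℝ) : ℂ)) *
    ((2 / (2 - Complex.exp (Complex.I * t))) *
      Gf c (Complex.exp (Complex.I * t) / (2 - Complex.exp (Complex.I * t)))) with hH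
  have hEq : Set.EqOn (fun t => (H t).re) (fun t : ℝ => ∑' j : ℕ, c j * Real.cos ((1 + j) * t - θ))
      (Set.Ioo (2 * π * k) (2 * π * k + 2 * π)) := by
    intro t ht
    simp only [hH]
    rw [ker_re hc hc0, euler_inf hc hcm (Complex.norm_exp_I_mul_ofReal t).le (norm_lt_of k ht)]
  refine AnalyticOnNhd.congr isOpen_Ioo ?_ hEq
  intro t ht
  have hlt := norm_lt_of k ht
  have hne : 2 - Complex.exp (Complex.I * t) ≠ 0 := by
    rw [← norm_pos_iff]; exact lt_of_le_of_lt (norm_nonneg _) hlt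
  have hof : AnalyticAt ℝ (fun t : ℝ => (t : ℂ)) t := Complex.ofRealCLM.analyticAt t
  have hex : AnalyticAt ℝ (fun t : ℝ => Complex.exp (Complex.I * t)) t := by
    have h1 : AnalyticAt ℝ (fun t : ℝ => Complex.I * (t : ℂ)) t := analyticAt_const.mul hof
    exact (AnalyticAt.restrictScalars (𝕜 := ℝ) (Complex.differentiable_exp.analyticAt _)).comp h1
  have hex2 : AnalyticAt ℝ (fun t : ℝ => Complex.exp (Complex.I * ((1 * t - θ : ℝ) : ℂ))) t := by
    have h1 : AnalyticAt ℝ (fun t : ℝ => Complex.I * ((1 * t - θ : ℝ) : ℂ)) t := by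
      push_cast
      exact analyticAt_const.mul ((analyticAt_const.mul hof).sub analyticAt_const)
    exact (AnalyticAt.restrictScalars (𝕜 := ℝ) (Complex.differentiable_exp.analyticAt _)).comp h1
  have hden : AnalyticAt ℝ (fun t : ℝ => 2 - Complex.exp (Complex.I * t)) t := analyticAt_const.sub hex
  have hw := hex.div hden hne
  have hG : AnalyticAt ℝ (Gf c) (Complex.exp (Complex.I * t) / (2 - Complex.exp (Complex.I * t))) := by
    refine AnalyticAt.restrictScalars (𝕜 := ℝ) (Gf_analytic hcm _ ?_)
    rw [mem_ball_zero_iff, norm_div, div_lt_one (norm_pos_iff.2 hne)]; exact hlt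
  have hGw := AnalyticAt.comp (f := fun t : ℝ => Complex.exp (Complex.I * t) / (2 - Complex.exp (Complex.I * t))) hG hw
  have hHa : AnalyticAt ℝ H t := hex2.mul ((analyticAt_const.div hden hne).mul hGw)
  exact (Complex.reCLM.analyticAt _).comp hHa

lemma ker_periodic (c : ℕ → ℝ) (θ : ℝ) (n : ℕ) (k : ℤ) (t : ℝ) :
    ∑' j : ℕ, c j * Real.cos ((n + j) * (t + 2 * π * k) - θ) = ∑' j : ℕ, c j * Real.cos ((n + j) * t - θ) := by
  refine tsum_congr fun j => ?_
  congr 1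
  have : ((n : ℝ) + j) * (t + 2 * π * k) - θ = (((n : ℝ) + j) * t - θ) + (((n + j : ℤ) * k : ℤ) : ℝ) * (2 * π) := by
    push_cast; ring
  rw [this, Real.cos_add_int_mul_two_pi]

lemma ker_cont {c : ℕ → ℝ} (hc : Summable c) (hc0 : ∀ j, 0 ≤ c j) (n θ : ℝ) :
    Continuous (fun t : ℝ => ∑' j : ℕ, c j * Real.cos ((n + j) * t - θ)) := by
  refine continuous_tsum (fun j => by fun_prop) hc (fun j x => ?_)
  rw [norm_mul, Real.norm_eq_abs, Real.norm_eq_abs, abs_of_nonneg (hc0 j)]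
  exact mul_le_of_le_one_right (hc0 j) (Real.abs_cos_le_one _)

lemma ker_ne_zero {c : ℕ → ℝ} (hc : Summable c) (hcm : CMs c) (hpos : 0 < c 0) (θ : ℝ) (k : ℤ) :
    ∃ t ∈ Set.Ioo (2 * π * k) (2 * π * k + 2 * π), ∑' j : ℕ, c j * Real.cos ((1 + j) * t - θ) ≠ 0 := by
  by_contra! hcon
  have hpi := Real.pi_pos
  have hc0 : ∀ j, 0 ≤ c j := fun j => hcm 0 j
  have hz : ∀ᵐ t ∂(volume : Measure ℝ), t ∈ Set.uIoc (-π) π → (∑' j : ℕ, c j * Real.cos ((1 + j) * t - θ)) = 0 := by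
    have h0 : ∀ᵐ t ∂(volume : Measure ℝ), t ≠ 0 := by simp [ae_iff]
    filter_upwards [h0] with t ht hmem
    rw [uIoc_pi] at hmem
    rcases lt_or_gt_of_ne ht with h | h
    · have h1 := hcon (t + 2 * π * ((k + 1 : ℤ))) (by
        push_cast; constructor <;> nlinarith [hmem.1, hmem.2])
      rw [← h1]
      have := ker_periodic c θ 1 (k + 1) t
      simpa using this.symm
    · have h1 := hcon (t + 2 * π * (k : ℤ)) (by
        constructor <;> nlinarith [hmem.1, hmem.2])
      rw [← h1]
      have := ker_periodic c θ 1 k t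
      simpa using this.symm
  have hint : ∀ ψ : ℝ → ℝ, (∫ t in (-π)..π, (∑' j : ℕ, c j * Real.cos ((1 + j) * t - θ)) * ψ t) = 0 := by
    intro ψ
    rw [intervalIntegral.integral_congr_ae (g := fun _ => (0 : ℝ))]
    · simp
    · filter_upwards [hz] with t ht hmem
      rw [ht hmem, zero_mul]
  have hexp : ∀ (j : ℕ) (t : ℝ), Real.cos ((1 + j) * t - θ) =
      Real.cos θ * Real.cos (((j : ℝ) + 1) * t) + Real.sin θ * Real.sin (((j : ℝ) + 1) * t) := by
    intro j t; rw [Real.cos_sub, add_comm (1 : ℝ)]; ring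
  have hcos := swap_sum (φ := fun t => Real.cos ((1 : ℕ) * t)) (Good.of_bound (by fun_prop) (fun t => Real.abs_cos_le_one _)) hc hc0
    (g := fun (j : ℕ) t => Real.cos ((1 + j) * t - θ)) (fun j => by fun_prop) 1 (fun j t => Real.abs_cos_le_one _)
  have hsin := swap_sum (φ := fun t => Real.sin ((1 : ℕ) * t)) (Good.of_bound (by fun_prop) (fun t => Real.abs_sin_le_one _)) hc hc0
    (g := fun (j : ℕ) t => Real.cos ((1 + j) * t - θ)) (fun j => by fun_prop) 1 (fun j t => Real.abs_cos_le_one _)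
  rw [hint] at hcos hsin
  have i1 : ∀ j : ℕ, ∫ t in (-π)..π, Real.cos ((1 + j) * t - θ) * Real.cos ((1 : ℕ) * t) = if j + 1 = 1 then Real.cos θ * π else 0 := by
    intro j
    simp_rw [hexp, add_mul, mul_assoc]
    rw [intervalIntegral.integral_add (by apply Continuous.intervalIntegrable; fun_prop)
      (by apply Continuous.intervalIntegrable; fun_prop), intervalIntegral.integral_const_mul,
      intervalIntegral.integral_const_mul]
    have a1 := int_cos_cos j 1
    have a2 := int_sin_cos j 1
    simp only [add_mul] at a1 a2
    rw [a1, a2]; simp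
  have i2 : ∀ j : ℕ, ∫ t in (-π)..π, Real.cos ((1 + j) * t - θ) * Real.sin ((1 : ℕ) * t) = if j + 1 = 1 then Real.sin θ * π else 0 := by
    intro j
    simp_rw [hexp, add_mul, mul_assoc]
    rw [intervalIntegral.integral_add (by apply Continuous.intervalIntegrable; fun_prop)
      (by apply Continuous.intervalIntegrable; fun_prop), intervalIntegral.integral_const_mul,
      intervalIntegral.integral_const_mul]
    have a1 := int_cos_sin j 1
    have a2 := int_sin_sin j 1
    simp only [add_mul] at a1 a2
    rw [a1, a2]; simp
  simp_rw [i1] at hcos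
  simp_rw [i2] at hsin
  have t1 := hcos.tsum_eq
  have t2 := hsin.tsum_eq
  rw [tsum_eq_single 0 (by intro b hb; simp [hb])] at t1 t2
  simp [hpos.ne', hpi.ne'] at t1 t2
  have := Real.sin_sq_add_cos_sq θ
  rw [t1, t2] at this
  norm_num at this

lemma ker_ae {c : ℕ → ℝ} (hc : Summable c) (hcm : CMs c) (hpos : 0 < c 0) (θ : ℝ) :
    ∀ᵐ t ∂(volume : Measure ℝ), ∑' j : ℕ, c j * Real.cos ((1 + j) * t - θ) ≠ 0 := by
  have hpi := Real.pi_pos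
  have h1 : ∀ k : ℤ, ∀ᵐ t ∂(volume.restrict (Set.Ioo (2 * π * k) (2 * π * k + 2 * π))),
      ∑' j : ℕ, c j * Real.cos ((1 + j) * t - θ) ≠ 0 := by
    intro k
    obtain ⟨t, ht, hne⟩ := ker_ne_zero hc hcm hpos θ k
    have := (ker_analytic hc hcm θ k).preimage_zero_mem_codiscreteWithin hne ht
      (isConnected_Ioo (by linarith))
    exact ae_restrict_le_codiscreteWithin measurableSet_Ioo this
  have h2 := (ae_restrict_iUnion_iff (fun k : ℤ => Set.Ioo (2 * π * k) (2 * π * k + 2 * π)) _).2 h1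
  have h3 : ∀ᵐ t ∂(volume : Measure ℝ), t ∉ Set.range (fun k : ℤ => 2 * π * (k : ℝ)) :=
    (Set.countable_range _).ae_notMem _
  have h4 := (ae_restrict_iff' (MeasurableSet.iUnion fun k : ℤ => measurableSet_Ioo)).1 h2
  filter_upwards [h3, h4] with t ht3 ht4
  apply ht4
  rw [Set.mem_iUnion]
  refine ⟨⌊t / (2 * π)⌋, ?_, ?_⟩
  · have := Int.floor_le (t / (2 * π))
    rw [le_div_iff₀ (by positivity)] at this
    refine lt_of_le_of_ne (by linarith) fun h => ht3 ⟨_, h⟩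
  · have := Int.lt_floor_add_one (t / (2 * π))
    rw [div_lt_iff₀ (by positivity)] at this
    linarith


lemma per_bound {g : ℝ → ℝ} {T : ℝ} (hT : 0 < T) (hg : Function.Periodic g T)
    (hi : ∀ a b, IntervalIntegrable g volume a b) (hb : ∀ t, |g t| ≤ 1)
    (h0 : ∫ t in (0 : ℝ)..T, g t = 0) (a b : ℝ) : |∫ t in a..b, g t| ≤ T := by
  set k : ℤ := ⌊(b - a) / T⌋ with hk
  have h1 : (k : ℝ) * T ≤ b - a := by
    have := Int.floor_le ((b - a) / T); rwa [le_div_iff₀ hT] at this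
  have h2 : b - a < (k : ℝ) * T + T := by
    have := Int.lt_floor_add_one ((b - a) / T); rw [div_lt_iff₀ hT] at this; linarith
  have h3 : ∫ t in a..(a + k • T), g t = 0 := by
    rw [hg.intervalIntegral_add_zsmul_eq k a hi, hg.intervalIntegral_add_eq 0 a |>.symm]
    simp [h0]
  rw [← intervalIntegral.integral_add_adjacent_intervals (hi a (a + k • T)) (hi _ b), h3, zero_add]
  have := intervalIntegral.norm_integral_le_of_norm_le_const (a := a + k • T) (b := b) (C := 1) (f := g)
    (fun t _ => hb t)
  rw [Real.norm_eq_abs] at this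
  refine this.trans ?_
  rw [one_mul, zsmul_eq_mul, abs_le]
  constructor <;> linarith

lemma per_bound_lin {g : ℝ → ℝ} {T : ℝ} (hT : 0 < T) (hg : Function.Periodic g T)
    (hi : ∀ a b, IntervalIntegrable g volume a b) (hb : ∀ t, |g t| ≤ 1)
    (h0 : ∫ t in (0 : ℝ)..T, g t = 0) {N : ℝ} (hN : 0 < N) (θ a b : ℝ) :
    |∫ t in a..b, g (N * t - θ)| ≤ T / N := by
  rw [intervalIntegral.integral_comp_mul_sub (fun t => g t) hN.ne' θ, smul_eq_mul, abs_mul,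
    abs_of_pos (inv_pos.2 hN), inv_mul_eq_div]
  exact div_le_div_of_nonneg_right (per_bound hT hg hi hb h0 _ _) hN.le

lemma osc_bound {g : ℝ → ℝ} {T : ℝ} (hT : 0 < T) (hg : Function.Periodic g T)
    (hc : Continuous g) (hb : ∀ t, |g t| ≤ 1)
    (h0 : ∫ t in (0 : ℝ)..T, g t = 0) {N : ℝ} (hN : 0 < N) (θ : ℝ) {y : ℝ} (hy : 0 < y) (hyp : y ≤ π) :
    |∫ t in y..π, (1 / t) * g (N * t - θ)| ≤ T / N * (1 / y) := by
  have hpi := Real.pi_pos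
  have hcc : Continuous (fun t => g (N * t - θ)) := by fun_prop
  set G : ℝ → ℝ := fun t => ∫ s in y..t, g (N * s - θ) with hG
  have hGb : ∀ t, |G t| ≤ T / N := fun t =>
    per_bound_lin hT hg (fun a b => hc.intervalIntegrable a b) hb h0 hN θ _ _
  have hpos : ∀ t ∈ Set.uIcc y π, 0 < t := by
    intro t ht; rw [Set.uIcc_of_le hyp] at ht; linarith [ht.1]
  have hGd : ∀ t, HasDerivAt G (g (N * t - θ)) t := fun t =>
    intervalIntegral.integral_hasDerivAt_right (hcc.intervalIntegrable _ _)
      (hcc.stronglyMeasurableAtFilter _ _) hcc.continuousAt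
  have hu : ∀ t ∈ Set.uIcc y π, HasDerivAt (fun t : ℝ => 1 / t) (-(1 / t ^ 2)) t := by
    intro t ht
    have := hasDerivAt_inv (hpos t ht).ne'
    simpa [one_div] using this
  have hcont : ContinuousOn (fun t : ℝ => 1 / t ^ 2) (Set.uIcc y π) := by
    apply ContinuousOn.div continuousOn_const (by fun_prop)
    intro t ht; have := hpos t ht; positivity
  have hint : IntervalIntegrable (fun t : ℝ => 1 / t ^ 2) volume y π := hcont.intervalIntegrable
  have hpar := intervalIntegral.integral_mul_deriv_eq_deriv_mul (a := y) (b := π) (u := fun t : ℝ => 1 / t)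
    (u' := fun t => -(1 / t ^ 2)) (v := G) (v' := fun t => g (N * t - θ)) hu (fun t _ => hGd t)
    hint.neg (hcc.intervalIntegrable _ _)
  rw [hpar]
  have hGy : G y = 0 := by simp [hG]
  have hI2 : ∫ t in y..π, 1 / t ^ 2 = 1 / y - 1 / π := by
    have := intervalIntegral.integral_eq_sub_of_hasDerivAt hu hint.neg
    rw [intervalIntegral.integral_neg] at this
    linarith
  have hI : |∫ t in y..π, -(1 / t ^ 2) * G t| ≤ T / N * (1 / y - 1 / π) := by
    rw [← hI2, ← intervalIntegral.integral_const_mul]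
    rw [← Real.norm_eq_abs]
    refine intervalIntegral.norm_integral_le_of_norm_le hyp ?_ (hint.const_mul _)
    refine Eventually.of_forall fun t ht => ?_
    rw [norm_mul, norm_neg, Real.norm_eq_abs, Real.norm_eq_abs, abs_of_nonneg (by positivity), mul_comm]
    exact mul_le_mul_of_nonneg_right (hGb t) (by positivity)
  rw [hGy, mul_zero, sub_zero]
  have h1 : |1 / π * G π| ≤ T / N * (1 / π) := by
    rw [abs_mul, abs_of_pos (by positivity), mul_comm]
    exact mul_le_mul_of_nonneg_right (hGb π) (by positivity)
  calc _ ≤ _ := abs_sub _ _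
    _ ≤ _ := add_le_add h1 hI
    _ = _ := by ring

lemma abs_sin_int {N : ℝ} (hN : 0 < N) (θ : ℝ) {y : ℝ} (hy : 0 < y) (hyp : y ≤ π) :
    |(∫ t in y..π, |Real.sin (N * t - θ)| / t) - 2 / π * Real.log (π / y)| ≤ π / N * (1 / y) := by
  have hpi := Real.pi_pos
  have hpos : ∀ t ∈ Set.uIcc y π, 0 < t := by
    intro t ht; rw [Set.uIcc_of_le hyp] at ht; linarith [ht.1]
  have h0 : ∫ t in (0 : ℝ)..π, (|Real.sin t| - 2 / π) = 0 := by
    rw [intervalIntegral.integral_sub (by apply Continuous.intervalIntegrable; fun_prop) (by simp)]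
    have : ∫ t in (0 : ℝ)..π, |Real.sin t| = ∫ t in (0 : ℝ)..π, Real.sin t := by
      apply intervalIntegral.integral_congr
      intro t ht
      rw [Set.uIcc_of_le hpi.le] at ht
      exact abs_of_nonneg (Real.sin_nonneg_of_mem_Icc ht)
    rw [this]; simp
    field_simp; norm_num
  have h := osc_bound (g := fun t => |Real.sin t| - 2 / π) hpi (by intro t; simp [Real.sin_add_pi])
    (by fun_prop) (by
      intro t
      have h1 := abs_nonneg (Real.sin t)
      have h2 := Real.abs_sin_le_one t
      have h3 : 2 / π ≤ 1 := by rw [div_le_one hpi]; linarith [Real.pi_gt_three]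
      have h4 : 0 ≤ 2 / π := by positivity
      rw [abs_le]; constructor <;> linarith) h0 hN θ hy hyp
  have e : ∫ t in y..π, (1 / t) * (|Real.sin (N * t - θ)| - 2 / π) =
      (∫ t in y..π, |Real.sin (N * t - θ)| / t) - 2 / π * Real.log (π / y) := by
    have hc1 : ContinuousOn (fun t : ℝ => 1 / t) (Set.uIcc y π) :=
      continuousOn_const.div continuousOn_id fun t ht => (hpos t ht).ne'
    have hc2 : ContinuousOn (fun t : ℝ => |Real.sin (N * t - θ)| / t) (Set.uIcc y π) :=
      ContinuousOn.div (by fun_prop) continuousOn_id fun t ht => (hpos t ht).ne'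
    have : ∀ t, (1 / t) * (|Real.sin (N * t - θ)| - 2 / π) = |Real.sin (N * t - θ)| / t - 2 / π * (1 / t) := by
      intro t; ring
    simp_rw [this]
    rw [intervalIntegral.integral_sub hc2.intervalIntegrable (hc1.intervalIntegrable.const_mul _),
      intervalIntegral.integral_const_mul, integral_one_div_of_pos hy hpi]
  rw [e] at h
  exact h

lemma sign_meas : Measurable Real.sign := by
  unfold Real.sign
  exact Measurable.ite measurableSet_Iio measurable_const
    (Measurable.ite measurableSet_Ioi measurable_const measurable_const)

lemma abs_sign_le (x : ℝ) : |Real.sign x| ≤ 1 := by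
  rcases Real.sign_apply_eq x with h | h | h <;> rw [h] <;> simp

lemma sign_int {N : ℝ} (hN : 0 < N) (θ a b : ℝ) :
    |∫ t in a..b, Real.sign (Real.sin (N * t - θ))| ≤ 2 * π / N := by
  have hpi := Real.pi_pos
  have hi : ∀ a b, IntervalIntegrable (fun t => Real.sign (Real.sin t)) volume a b := by
    intro a b
    rw [intervalIntegrable_iff]
    refine Integrable.mono' (g := fun _ => (1 : ℝ)) (intervalIntegrable_iff.1 intervalIntegrable_const) ?_ (Eventually.of_forall fun t => abs_sign_le _)
    exact (sign_meas.comp Real.measurable_sin).aestronglyMeasurable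
  refine per_bound_lin (g := fun t => Real.sign (Real.sin t)) (by positivity)
    (by intro t; simp only [Real.sin_add_two_pi]) hi
    (fun t => abs_sign_le _) ?_ hN θ a b
  rw [← intervalIntegral.integral_add_adjacent_intervals (hi 0 π) (hi π (2 * π))]
  have : ∫ t in π..(2 * π), Real.sign (Real.sin t) = ∫ t in (0 : ℝ)..π, Real.sign (Real.sin (t + π)) := by
    rw [intervalIntegral.integral_comp_add_right (fun t => Real.sign (Real.sin t))]; congr 1 <;> ring
  rw [this]
  simp_rw [Real.sin_add_pi, Real.sign_neg]
  rw [intervalIntegral.integral_neg]; simp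

lemma half_est {N : ℝ} (θ : ℝ) {y A : ℝ} (hA : 0 ≤ A) (hy : 0 < y) (hyp : y ≤ π) (hNy : 4 ≤ N * y)
    {h : ℝ → ℝ} (hi : IntervalIntegrable h volume y π)
    (hb : ∀ t ∈ Set.Ioc y π, |h t - A * (|Real.sin (N * t - θ)| / t)| ≤ A * (π ^ 2 * y / 2 * (1 / t ^ 2) + 1)) :
    |(∫ t in y..π, h t) - A * (2 / π * Real.log (π / y))| ≤ A * (π ^ 2 / 2 + π + 1) := by
  have hpi := Real.pi_pos
  have hN : 0 < N := by by_contra hh; push Not at hh; nlinarith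
  have hpos : ∀ t ∈ Set.uIcc y π, 0 < t := by
    intro t ht; rw [Set.uIcc_of_le hyp] at ht; linarith [ht.1]
  have hu : ∀ t ∈ Set.uIcc y π, HasDerivAt (fun t : ℝ => -(1 / t)) (1 / t ^ 2) t := by
    intro t ht
    have := (hasDerivAt_inv (hpos t ht).ne').neg
    simp only [one_div]
    exact this.congr_deriv (by simp)
  have hcont : ContinuousOn (fun t : ℝ => 1 / t ^ 2) (Set.uIcc y π) := by
    apply ContinuousOn.div continuousOn_const (by fun_prop)
    intro t ht; have := hpos t ht; positivity
  have hint : IntervalIntegrable (fun t : ℝ => 1 / t ^ 2) volume y π := hcont.intervalIntegrable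
  have hI2 : ∫ t in y..π, 1 / t ^ 2 = 1 / y - 1 / π := by
    have := intervalIntegral.integral_eq_sub_of_hasDerivAt hu hint
    rw [this]; ring
  have hc2 : ContinuousOn (fun t : ℝ => |Real.sin (N * t - θ)| / t) (Set.uIcc y π) :=
      ContinuousOn.div (by fun_prop) continuousOn_id fun t ht => (hpos t ht).ne'
  have hii : IntervalIntegrable _ volume y π := hc2.intervalIntegrable
  have h1 : |(∫ t in y..π, h t) - A * (∫ t in y..π, |Real.sin (N * t - θ)| / t)| ≤ A * (π ^ 2 / 2 + π) := by
    rw [← intervalIntegral.integral_const_mul, ← intervalIntegral.integral_sub hi (hii.const_mul A),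
      ← Real.norm_eq_abs]
    have := intervalIntegral.norm_integral_le_of_norm_le (μ := volume)
      (f := fun t => h t - A * (|Real.sin (N * t - θ)| / t)) hyp (Eventually.of_forall hb)
      (((hint.const_mul (π ^ 2 * y / 2)).add (intervalIntegrable_const (c := (1 : ℝ)))).const_mul A)
    refine this.trans ?_
    rw [intervalIntegral.integral_const_mul, intervalIntegral.integral_add (hint.const_mul _) intervalIntegrable_const,
      intervalIntegral.integral_const_mul, hI2]
    simp only [intervalIntegral.integral_const, smul_eq_mul, mul_one]
    gcongr
    · have : π ^ 2 * y / 2 * (1 / y - 1 / π) = π ^ 2 / 2 - π * y / 2 := by field_simp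
      rw [this]; have : 0 ≤ π * y / 2 := by positivity
      linarith
    · linarith
  have h2 := abs_sin_int hN θ hy hyp
  have h3 : π / N * (1 / y) ≤ 1 := by
    rw [div_mul_div_comm, mul_one, div_le_one (by positivity)]
    linarith [Real.pi_lt_four]
  have h4 : |A * (∫ t in y..π, |Real.sin (N * t - θ)| / t) - A * (2 / π * Real.log (π / y))| ≤ A * 1 := by
    rw [← mul_sub, abs_mul, abs_of_nonneg hA]
    exact mul_le_mul_of_nonneg_left (h2.trans h3) hA
  have := abs_sub_le (∫ t in y..π, h t) (A * (∫ t in y..π, |Real.sin (N * t - θ)| / t)) (A * (2 / π * Real.log (π / y)))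
  linarith


/-- hypotheses on coefficients -/
structure KS (c : ℕ → ℝ) (n y : ℝ) : Prop where
  hc : Summable c
  hc0 : ∀ j, 0 ≤ c j
  ha : ∀ j, c (j + 1) ≤ c j
  hconv : ∀ j, c (j + 1) - c (j + 2) ≤ c j - c (j + 1)
  hy0 : 0 < y
  hy1 : y ≤ 1
  hy : c 0 - c 1 ≤ c 0 * y
  hsum : ∑' j, c j ≤ c 0 * (3 / y)
  hN : 2 * π ≤ (n - 1 / 2) * y

/-- the kernel -/
noncomputable def Kf (c : ℕ → ℝ) (n θ t : ℝ) : ℝ := ∑' j : ℕ, c j * Real.cos ((n + j) * t - θ)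

lemma Kf_neg (c : ℕ → ℝ) (n θ t : ℝ) : Kf c n θ (-t) = Kf c n (-θ) t := by
  unfold Kf
  refine tsum_congr fun j => ?_
  rw [← Real.cos_neg]; congr 2; ring

namespace KS
variable {c : ℕ → ℝ} {n y : ℝ}

lemma cont (h : KS c n y) (θ : ℝ) : Continuous (Kf c n θ) := ker_cont h.hc h.hc0 n θ

lemma bound (h : KS c n y) (θ t : ℝ) : |Kf c n θ t| ≤ c 0 * (3 / y) := by
  refine le_trans ?_ h.hsum
  unfold Kf
  rw [← Real.norm_eq_abs]
  refine tsum_of_norm_bounded h.hc.hasSum (fun j => ?_)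
  rw [norm_mul, Real.norm_eq_abs, Real.norm_eq_abs, abs_of_nonneg (h.hc0 j)]
  exact mul_le_of_le_one_right (h.hc0 j) (Real.abs_cos_le_one _)

lemma mid (h : KS c n y) (θ : ℝ) {g : ℝ → ℝ} (hg : ∀ t, |t| ≤ y → |g t| ≤ |Kf c n θ t|) :
    |∫ t in (-y)..y, g t| ≤ 6 * c 0 := by
  have hy0 := h.hy0
  have := intervalIntegral.norm_integral_le_of_norm_le_const (a := -y) (b := y) (C := c 0 * (3 / y)) (f := g)
    (fun t ht => by
      rw [Set.uIoc_of_le (by linarith)] at ht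
      exact (hg t (abs_le.2 ⟨ht.1.le, ht.2⟩)).trans (h.bound θ t))
  rw [Real.norm_eq_abs] at this
  refine this.trans (le_of_eq ?_)
  rw [abs_of_pos (by linarith)]; field_simp; ring

lemma yle (h : KS c n y) : y ≤ π := h.hy1.trans (by linarith [Real.pi_gt_three])

lemma est (h : KS c n y) (θ : ℝ) : ∀ t ∈ Set.Ioc y π, 
    |Kf c n θ t + c 0 * (Real.sin ((n - 1 / 2) * t - θ) / t)| ≤ c 0 * (π ^ 2 * y / 2 * (1 / t ^ 2) + 1) := by
  intro t ht
  exact ker_est h.hc h.hc0 h.ha h.hconv h.hy0 h.hy n θ (by linarith [ht.1, h.hy0]) ht.2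

lemma halfUp (h : KS c n y) (θ : ℝ) :
    |(∫ t in y..π, |Kf c n θ t|) - c 0 * (2 / π * Real.log (π / y))| ≤ c 0 * (π ^ 2 / 2 + π + 1) := by
  refine half_est (N := n - 1 / 2) θ (h.hc0 0) h.hy0 h.yle (by linarith [h.hN, Real.pi_gt_three])
    ((h.cont θ).abs.intervalIntegrable _ _) (fun t ht => le_trans ?_ (h.est θ t ht))
  have ht0 : 0 < t := by linarith [ht.1, h.hy0]
  have e : c 0 * (|Real.sin ((n - 1 / 2) * t - θ)| / t) = |-(c 0 * (Real.sin ((n - 1 / 2) * t - θ) / t))| := by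
    rw [abs_neg, abs_mul, abs_div, abs_of_nonneg (h.hc0 0), abs_of_pos ht0]
  rw [e]
  refine (abs_abs_sub_abs_le_abs_sub _ _).trans (le_of_eq ?_)
  rw [sub_neg_eq_add]

lemma halfLow (h : KS c n y) (θ : ℝ) :
    |(∫ t in y..π, Kf c n θ t * -(Real.sign (Real.sin ((n - 1 / 2) * t - θ)))) - c 0 * (2 / π * Real.log (π / y))|
      ≤ c 0 * (π ^ 2 / 2 + π + 1) := by
  refine half_est (N := n - 1 / 2) θ (h.hc0 0) h.hy0 h.yle (by linarith [h.hN, Real.pi_gt_three])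
    ?_ (fun t ht => le_trans ?_ (h.est θ t ht))
  · have hi := (h.cont θ).abs.intervalIntegrable (μ := volume) y π
    refine hi.mono_fun' ?_ (Eventually.of_forall fun t => ?_)
    · exact ((h.cont θ).measurable.mul (sign_meas.comp (by fun_prop)).neg).aestronglyMeasurable
    · change ‖Kf c n θ t * -(Real.sign (Real.sin ((n - 1 / 2) * t - θ)))‖ ≤ ‖Kf c n θ t‖
      rw [norm_mul, norm_neg]
      exact mul_le_of_le_one_right (norm_nonneg _) (abs_sign_le _)
  · have ht0 : 0 < t := by linarith [ht.1, h.hy0]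
    set S := Real.sin ((n - 1 / 2) * t - θ)
    have e : Kf c n θ t * -(Real.sign S) - c 0 * (|S| / t) = -(Real.sign S) * (Kf c n θ t + c 0 * (S / t)) := by
      have : |S| = Real.sign S * S := by
        rcases lt_trichotomy S 0 with hS | hS | hS
        · rw [Real.sign_of_neg hS, abs_of_neg hS]; ring
        · simp [hS]
        · rw [Real.sign_of_pos hS, abs_of_pos hS]; ring
      rw [this]; ring
    rw [e, abs_mul, abs_neg]
    exact mul_le_of_le_one_left (abs_nonneg _) (abs_sign_le _)

lemma split3 (h : KS c n y) {g : ℝ → ℝ} (hg : IntervalIntegrable g volume (-π) π) :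
    ∫ t in (-π)..π, g t = (∫ t in y..π, g (-t)) + (∫ t in (-y)..y, g t) + ∫ t in y..π, g t := by
  have hy0 := h.hy0
  have hyp := h.yle
  have hs : ∀ a b, -π ≤ a → a ≤ b → b ≤ π → IntervalIntegrable g volume a b := by
    intro a b h1 h2 h3
    apply hg.mono_set
    rw [Set.uIcc_of_le h2, Set.uIcc_of_le (by linarith)]
    exact Set.Icc_subset_Icc h1 h3
  rw [← intervalIntegral.integral_add_adjacent_intervals (hs (-π) y (by linarith) (by linarith) (by linarith))
    (hs y π (by linarith) (by linarith) (by linarith)),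
    ← intervalIntegral.integral_add_adjacent_intervals (hs (-π) (-y) (by linarith) (by linarith) (by linarith))
    (hs (-y) y (by linarith) (by linarith) (by linarith)), intervalIntegral.integral_comp_neg (fun t => g t)]

lemma upper (h : KS c n y) (θ : ℝ) :
    ∫ t in (-π)..π, |Kf c n θ t| ≤ c 0 * (4 / π * Real.log (π / y) + (π ^ 2 + 2 * π + 8)) := by
  rw [h.split3 ((h.cont θ).abs.intervalIntegrable _ _)]
  simp_rw [Kf_neg]
  have h1 := (abs_le.1 (h.halfUp (-θ))).2
  have h2 := (abs_le.1 (h.halfUp θ)).2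
  have h3 := (abs_le.1 (h.mid θ (g := fun t => |Kf c n θ t|) (fun t _ => by rw [abs_abs]))).2
  have e : c 0 * (4 / π * Real.log (π / y)) = 2 * (c 0 * (2 / π * Real.log (π / y))) := by ring
  rw [mul_add, e]
  linarith

lemma lower (h : KS c n y) (θ : ℝ) : ∃ s : ℝ → ℝ, Measurable s ∧ (∀ t, |s t| ≤ 1) ∧
    (∫ t in (-π)..π, s t) = 0 ∧
    c 0 * (4 / π * Real.log (π / y) - (π ^ 2 + 2 * π + 8)) ≤ ∫ t in (-π)..π, Kf c n θ (-t) * s t := by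
  have hpi := Real.pi_pos
  have hy0 := h.hy0
  have hyp := h.yle
  have hN : 0 < n - 1 / 2 := by
    by_contra hh; push Not at hh; nlinarith [h.hN]
  set S : ℝ → ℝ → ℝ := fun θ t => -(Real.sign (Real.sin ((n - 1 / 2) * t - θ))) with hS
  have hSm : ∀ θ, Measurable (S θ) := fun θ => (sign_meas.comp (by fun_prop)).neg
  have hSb : ∀ θ t, |S θ t| ≤ 1 := fun θ t => by simp only [hS, abs_neg]; exact abs_sign_le _
  have hSi : ∀ θ, |∫ t in y..π, S θ t| ≤ y := by
    intro θ
    simp only [hS]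
    rw [intervalIntegral.integral_neg, abs_neg]
    refine (sign_int hN θ y π).trans ?_
    rw [div_le_iff₀ hN]; linarith [h.hN]
  set κ : ℝ := -((∫ t in y..π, S θ t) + ∫ t in y..π, S (-θ) t) / (2 * y) with hκ
  have hκb : |κ| ≤ 1 := by
    rw [hκ, abs_div, abs_neg, abs_of_pos (by positivity : 0 < 2 * y), div_le_one (by positivity)]
    refine (abs_add_le _ _).trans ?_
    linarith [hSi θ, hSi (-θ)]
  set s : ℝ → ℝ := fun t => if y < t then S (-θ) t else if t < -y then S θ (-t) else κ with hs
  have hsm : Measurable s := by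
    refine Measurable.ite measurableSet_Ioi (hSm _) (Measurable.ite measurableSet_Iio ?_ measurable_const)
    exact (hSm θ).comp measurable_neg
  have hsb : ∀ t, |s t| ≤ 1 := by
    intro t; simp only [hs]; split_ifs
    · exact hSb _ _
    · exact hSb _ _
    · exact hκb
  have hG : Good s := Good.of_bound hsm hsb
  have hint : IntervalIntegrable s volume (-π) π := by
    simpa using hG.intervalIntegrable_mul (g := fun _ => 1) continuous_const
  have hKc : Continuous (fun t => Kf c n θ (-t)) := (h.cont θ).comp continuous_neg
  have hint2 := hG.intervalIntegrable_mul hKc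
  have s1 : ∀ t ∈ Set.Ioc y π, s t = S (-θ) t := fun t ht => by simp only [hs]; rw [if_pos ht.1]
  have s2 : ∀ t ∈ Set.Ioc y π, s (-t) = S θ t := fun t ht => by
    simp only [hs]; rw [if_neg (by linarith [ht.1]), if_pos (by linarith [ht.1]), neg_neg]
  have s3 : ∀ t ∈ Set.Ioc (-y) y, s t = κ := fun t ht => by
    simp only [hs]; rw [if_neg (by linarith [ht.2]), if_neg (by linarith [ht.1])]
  have cong : ∀ (a b : ℝ) (f g : ℝ → ℝ), a ≤ b → (∀ t ∈ Set.Ioc a b, f t = g t) →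
      ∫ t in a..b, f t = ∫ t in a..b, g t := by
    intro a b f g hab hfg
    apply intervalIntegral.integral_congr_ae
    rw [Set.uIoc_of_le hab]
    exact Eventually.of_forall hfg
  refine ⟨s, hsm, hsb, ?_, ?_⟩
  · rw [h.split3 hint, cong y π _ _ hyp s1, cong y π (fun t => s (-t)) _ hyp s2, cong (-y) y _ _ (by linarith) s3]
    simp only [intervalIntegral.integral_const, smul_eq_mul]
    rw [hκ]; field_simp; ring
  · rw [h.split3 hint2]
    have e1 : ∫ t in y..π, Kf c n θ (-t) * s t = ∫ t in y..π, Kf c n (-θ) t * S (-θ) t :=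
      cong _ _ _ _ hyp fun t ht => by rw [s1 t ht, Kf_neg]
    have e2 : ∫ t in y..π, Kf c n θ (- -t) * s (-t) = ∫ t in y..π, Kf c n θ t * S θ t :=
      cong _ _ _ _ hyp fun t ht => by rw [s2 t ht, neg_neg]
    rw [e1, e2]
    have h1 := (abs_le.1 (h.halfLow (-θ))).1
    have h2 := (abs_le.1 (h.halfLow θ)).1
    have h3 := (abs_le.1 (h.mid (-θ) (g := fun t => Kf c n θ (-t) * s t) (fun t _ => by
      rw [Kf_neg, abs_mul]; exact mul_le_of_le_one_right (abs_nonneg _) (hsb t)))).1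
    have e : c 0 * (4 / π * Real.log (π / y)) = 2 * (c 0 * (2 / π * Real.log (π / y))) := by ring
    rw [mul_sub, e]
    simp only [hS]
    linarith

end KS


lemma n1_nonempty {α r : ℝ} (hα : 0 < α) (hr0 : 0 < r) (hr1 : r < 1) :
    {n : ℕ | 0 < n ∧
    1 / (α * r) * (n : ℝ) ^ (-r) * (1 + Real.log (π * (n : ℝ) ^ (1 - r) / (α * r))) +
      α * r * (n : ℝ) ^ (-(1 - r)) ≤ 1 / (3 * π) ^ 3}.Nonempty := by
  have hpi := Real.pi_pos
  have hlim : Tendsto (fun x : ℝ => 1 / (α * r) * x ^ (-r) * (1 + Real.log (π / (α * r)))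
      + 1 / (α * r) * (1 - r) * (Real.log x / x ^ r) + α * r * x ^ (-(1 - r))) atTop
      (nhds (1 / (α * r) * 0 * (1 + Real.log (π / (α * r)))
      + 1 / (α * r) * (1 - r) * 0 + α * r * 0)) := by
    refine Tendsto.add (Tendsto.add ?_ ?_) ?_
    · exact ((tendsto_rpow_neg_atTop hr0).const_mul _).mul_const _
    · exact ((isLittleO_log_rpow_atTop hr0).tendsto_div_nhds_zero).const_mul _
    · exact (tendsto_rpow_neg_atTop (by linarith)).const_mul _
  simp only [mul_zero, zero_mul, add_zero] at hlim
  have h2 := (hlim.comp tendsto_natCast_atTop_atTop).eventually_le_const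
    (show (0 : ℝ) < 1 / (3 * π) ^ 3 by positivity)
  obtain ⟨n, hn, hn0⟩ := (h2.and (eventually_gt_atTop 0)).exists
  refine ⟨n, hn0, le_trans (le_of_eq ?_) hn⟩
  have hn0' : (0 : ℝ) < n := by exact_mod_cast hn0
  have : π * (n : ℝ) ^ (1 - r) / (α * r) = (π / (α * r)) * (n : ℝ) ^ (1 - r) := by ring
  simp only [Function.comp]
  rw [this, Real.log_mul (by positivity) (by positivity), Real.log_rpow hn0', Real.rpow_neg hn0'.le r]
  ring

lemma n1_facts {α r : ℝ} (hα : 0 < α) (hr0 : 0 < r) (hr1 : r < 1) {n : ℕ} (hn : n₁ α r ≤ n) :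
    1 ≤ n ∧ 700 ≤ α * r * (n : ℝ) ^ (r - 1) * n ∧ α * r * (n : ℝ) ^ (r - 1) ≤ 1 := by
  have hpi := Real.pi_gt_three
  have hmem := Nat.sInf_mem (n1_nonempty hα hr0 hr1)
  change n₁ α r ∈ _ at hmem
  obtain ⟨hm0, hm⟩ := hmem
  set m := n₁ α r with hmdef
  have hm0' : (0 : ℝ) < m := by exact_mod_cast hm0
  have hm1 : (1 : ℝ) ≤ m := by exact_mod_cast hm0
  have hnm : (m : ℝ) ≤ n := by exact_mod_cast hn
  have hmul : ∀ k : ℝ, 0 < k → k ^ (r - 1) * k = k ^ r := by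
    intro k hk
    rw [← Real.rpow_add_one hk.ne']; congr 1; ring
  set y := α * r * (m : ℝ) ^ (r - 1) with hy
  have hy0 : 0 < y := by positivity
  set x := y * m with hx
  have hx0 : 0 < x := by positivity
  have hxe : x = α * r * (m : ℝ) ^ r := by rw [hx, hy, mul_assoc, hmul _ hm0']
  have hyx : y ≤ x := by rw [hx]; exact le_mul_of_one_le_right hy0.le hm1
  have e1 : 1 / (α * r) * (m : ℝ) ^ (-r) = 1 / x := by
    rw [hxe, Real.rpow_neg hm0'.le]; field_simp
  have e2 : π * (m : ℝ) ^ (1 - r) / (α * r) = π / y := by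
    rw [hy, show (1 - r) = -(r - 1) by ring, Real.rpow_neg hm0'.le]; field_simp
  have e3 : α * r * (m : ℝ) ^ (-(1 - r)) = y := by rw [hy]; congr 2; ring
  rw [e1, e2, e3] at hm
  have heps : 1 / (3 * π) ^ 3 ≤ 1 / 729 := by
    apply one_div_le_one_div_of_le (by norm_num)
    have : (9 : ℝ) ^ 3 ≤ (3 * π) ^ 3 := by gcongr; linarith
    linarith
  have hm' := hm.trans heps
  have hlog : 1 - y / π ≤ Real.log (π / y) := by
    have := Real.one_sub_inv_le_log_of_pos (show 0 < π / y by positivity)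
    rwa [inv_div] at this
  have hyle : y ≤ 1 / 729 := by
    by_cases h : 0 ≤ 1 + Real.log (π / y)
    · have : 0 ≤ 1 / x * (1 + Real.log (π / y)) := by positivity
      linarith
    · exfalso
      push Not at h
      have h1 : 2 * π < y := by
        have : 2 < y / π := by linarith
        rwa [lt_div_iff₀ (by linarith)] at this
      have h2 : 1 / x * (1 + Real.log (π / y)) ≥ - (1 / π) := by
        rw [ge_iff_le, one_div_mul_eq_div, le_div_iff₀ hx0]
        have : y / π ≤ 1 / π * x := by rw [div_mul_eq_mul_div, one_mul]; gcongr
        linarith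
      have h3 : 1 / π ≤ 1 / 3 := one_div_le_one_div_of_le (by norm_num) (by linarith)
      linarith
  have hxge : 729 ≤ x := by
    have h1 : 1 ≤ 1 + Real.log (π / y) := by
      have : y / π ≤ 1 := by rw [div_le_one (by linarith)]; linarith
      linarith
    have h2 : 1 / x ≤ 1 / x * (1 + Real.log (π / y)) := le_mul_of_one_le_right (by positivity) h1
    have h3 : 1 / x ≤ 1 / 729 := by linarith
    exact (one_div_le_one_div hx0 (by norm_num)).1 h3
  have hn0 : (0 : ℝ) < n := by linarith
  refine ⟨by omega, ?_, ?_⟩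
  · rw [mul_assoc, hmul _ hn0]
    have : (m : ℝ) ^ r ≤ (n : ℝ) ^ r := by gcongr
    have : α * r * (m : ℝ) ^ r ≤ α * r * (n : ℝ) ^ r := by gcongr
    linarith
  · have : (n : ℝ) ^ (r - 1) ≤ (m : ℝ) ^ (r - 1) := Real.rpow_le_rpow_of_nonpos hm0' hnm (by linarith)
    have : α * r * (n : ℝ) ^ (r - 1) ≤ y := by rw [hy]; gcongr
    linarith

lemma KS_exp {α r : ℝ} (hα : 0 < α) (hr0 : 0 < r) (hr1 : r < 1) {n : ℕ} (hn : n₁ α r ≤ n) :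
    KS (fun j : ℕ => Real.exp (-α * ((n : ℝ) + j) ^ r)) n (α * r * (n : ℝ) ^ (r - 1)) := by
  obtain ⟨h1, h2, h3⟩ := n1_facts hα hr0 hr1 hn
  have hn0 : (0 : ℝ) < n := by exact_mod_cast h1
  obtain ⟨s1, s2⟩ := lam_summable hα hr0 h1 (by linarith) h3
  have hcm := CMs_exp hα hr0 hr1 hn0
  refine ⟨s1, fun j => (Real.exp_pos _).le, fun j => ?_, fun j => ?_, by positivity, h3, ?_, ?_, ?_⟩
  · have := hcm 1 j
    simp only [Function.iterate_one, dS] at this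
    linarith
  · have := hcm 2 j
    simp only [Function.iterate_succ, Function.iterate_zero, Function.comp, id, dS] at this
    simp only [add_assoc, one_add_one_eq_two] at this ⊢
    linarith
  · set y := α * r * (n : ℝ) ^ (r - 1) with hy
    have hb : ((n : ℝ) + 1) ^ r ≤ (n : ℝ) ^ r + r * (n : ℝ) ^ (r - 1) := by
      have := rpow_one_add_le_one_add_mul_self (s := 1 / (n : ℝ))
        (by have : 0 ≤ 1 / (n : ℝ) := by positivity
            linarith) hr0.le hr1.le
      have e : (n : ℝ) + 1 = n * (1 + 1 / n) := by field_simp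
      rw [e, Real.mul_rpow hn0.le (by positivity)]
      calc (n : ℝ) ^ r * (1 + 1 / n) ^ r ≤ (n : ℝ) ^ r * (1 + r * (1 / n)) := by gcongr
        _ = _ := by rw [Real.rpow_sub_one hn0.ne']; ring
    have hc : Real.exp (-α * (n : ℝ) ^ r) * Real.exp (-y) ≤ Real.exp (-α * ((n : ℝ) + 1) ^ r) := by
      rw [← Real.exp_add]; apply Real.exp_le_exp.2
      have := mul_le_mul_of_nonneg_left hb hα.le
      rw [hy]; linarith
    have he := Real.add_one_le_exp (-y)
    have := mul_le_mul_of_nonneg_left he (Real.exp_pos (-α * (n : ℝ) ^ r)).le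
    simp only [Nat.cast_zero, add_zero, Nat.cast_one]
    linarith
  · simpa using s2
  · have := Real.pi_lt_four
    linarith


lemma full_summable {α r : ℝ} (hα : 0 < α) (hr0 : 0 < r) (hr1 : r < 1) :
    Summable (fun j : ℕ => Real.exp (-α * ((j : ℝ) + 1) ^ r)) := by
  obtain ⟨h1, h2, h3⟩ := n1_facts hα hr0 hr1 le_rfl
  obtain ⟨s1, -⟩ := lam_summable hα hr0 h1 (by linarith) h3
  rw [← summable_nat_add_iff (n₁ α r)]
  have := (summable_nat_add_iff 1).2 s1
  refine this.congr fun j => ?_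
  congr 3
  push_cast; ring

lemma kernel_eq_Kf (α r β t : ℝ) : genPoissonKernel α r β t =
    ∑' j : ℕ, Real.exp (-α * ((j : ℝ) + 1) ^ r) * Real.cos ((1 + j) * t - β * π / 2) := by
  unfold genPoissonKernel
  refine tsum_congr fun j => ?_
  rw [add_comm (1 : ℝ) j]

lemma kernel_cont {α r : ℝ} (hα : 0 < α) (hr0 : 0 < r) (hr1 : r < 1) (β : ℝ) :
    Continuous (genPoissonKernel α r β) := by
  have := ker_cont (full_summable hα hr0 hr1) (fun j => (Real.exp_pos _).le) 1 (β * π / 2)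
  exact this.congr fun t => (kernel_eq_Kf α r β t).symm

lemma kernel_per (α r β t : ℝ) : genPoissonKernel α r β (t + 2 * π) = genPoissonKernel α r β t := by
  rw [kernel_eq_Kf, kernel_eq_Kf]
  have := ker_periodic (fun j => Real.exp (-α * ((j : ℝ) + 1) ^ r)) (β * π / 2) 1 1 t
  simpa using this

lemma kernel_ae {α r : ℝ} (hα : 0 < α) (hr0 : 0 < r) (hr1 : r < 1) (β x : ℝ) :
    ∀ᵐ t ∂(volume : Measure ℝ), genPoissonKernel α r β (x - t) ≠ 0 := by
  have hcm := CMs_exp hα hr0 hr1 one_pos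
  have hcm' : CMs (fun j : ℕ => Real.exp (-α * ((j : ℝ) + 1) ^ r)) := by
    simpa only [add_comm] using hcm
  have := ker_ae (full_summable hα hr0 hr1) hcm' (Real.exp_pos _) (β * π / 2)
  have h2 := (Measure.measurePreserving_sub_left volume x).quasiMeasurePreserving.ae this
  filter_upwards [h2] with t ht
  rwa [kernel_eq_Kf]

lemma ae_shift {φ : ℝ → ℝ} (hper : ∀ x, φ (x + 2 * π) = φ x)
    (hb : eLpNorm φ ∞ (volume.restrict (Set.Ioc (0 : ℝ) (2 * π))) ≤ 1) :
    ∀ᵐ t ∂(volume.restrict (Set.Ioc (-π) π)), |φ t| ≤ 1 := by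
  have hpi := Real.pi_pos
  have h0 : ∀ᵐ t ∂(volume.restrict (Set.Ioc (0 : ℝ) (2 * π))), |φ t| ≤ 1 := by
    rw [eLpNorm_exponent_top] at hb
    filter_upwards [ae_le_eLpNormEssSup (f := φ) (μ := volume.restrict (Set.Ioc (0 : ℝ) (2 * π)))] with t ht
    have := ht.trans hb
    rw [Real.enorm_eq_ofReal_abs] at this
    exact ENNReal.ofReal_le_one.1 this
  rw [ae_restrict_iff' measurableSet_Ioc] at h0 ⊢
  have h1 := (measurePreserving_add_right volume (2 * π)).quasiMeasurePreserving.ae h0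
  filter_upwards [h0, h1] with t a b ht
  by_cases h : 0 < t
  · exact a ⟨h, by linarith [ht.2]⟩
  · have := b ⟨by linarith [ht.1], by linarith⟩
    rwa [hper] at this

/-- every member of the class is represented by a measurable density -/
lemma class_good {α r : ℝ} (hα : 0 < α) (hr0 : 0 < r) (hr1 : r < 1) {β : ℝ} {f : ℝ → ℝ}
    (hf : f ∈ poissonClass α r β ∞) : ∃ c0 : ℝ, ∃ φ : ℝ → ℝ, Good φ ∧
      ∀ x, f x = c0 + (1 / π) * ∫ t in (-π)..π, genPoissonKernel α r β (x - t) * φ t := by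
  obtain ⟨-, a₀, φ, hper, hb, -, hfx⟩ := hf
  have hae := ae_shift hper hb
  by_cases hm : AEStronglyMeasurable φ (volume.restrict (Set.Ioc (-π) π))
  · exact ⟨a₀ / 2, φ, ⟨hm, hae⟩, hfx⟩
  · refine ⟨a₀ / 2, fun _ => 0, Good.of_bound measurable_const (by simp), fun x => ?_⟩
    rw [hfx x]
    congr 2
    have : ¬ IntervalIntegrable (fun t => genPoissonKernel α r β (x - t) * φ t) volume (-π) π := by
      intro hi
      rw [intervalIntegrable_iff, uIoc_pi] at hi
      apply hm
      have hk : Measurable (fun t => (genPoissonKernel α r β (x - t))⁻¹) :=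
        ((kernel_cont hα hr0 hr1 β).measurable.comp (measurable_const.sub measurable_id)).inv
      have h1 := (hk.aestronglyMeasurable (μ := volume.restrict (Set.Ioc (-π) π))).mul hi.aestronglyMeasurable
      refine h1.congr ?_
      filter_upwards [ae_restrict_of_ae (kernel_ae hα hr0 hr1 β x)] with t ht
      simp only [Pi.mul_apply]
      field_simp
    rw [intervalIntegral.integral_undef this]
    simp

lemma dev_eq {α r : ℝ} (hα : 0 < α) (hr0 : 0 < r) (hr1 : r < 1) {β : ℝ} {n : ℕ} (hn : 1 ≤ n)
    {f φ : ℝ → ℝ} {c0 : ℝ} (hφ : Good φ)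
    (hf : ∀ x, f x = c0 + (1 / π) * ∫ t in (-π)..π, genPoissonKernel α r β (x - t) * φ t) (x : ℝ) :
    f x - fourierSum (n - 1) f x = (1 / π) * ∫ t in (-π)..π,
      Kf (fun j : ℕ => Real.exp (-α * ((n : ℝ) + j) ^ r)) n (β * π / 2) (x - t) * φ t := by
  rw [fourier_main hφ (full_summable hα hr0 hr1) (fun j => (Real.exp_pos _).le) (β * π / 2) c0 hf (n - 1) x]
  congr 1
  refine intervalIntegral.integral_congr fun t _ => ?_
  simp only [Kf]
  congr 1
  refine tsum_congr fun j => ?_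
  have : ((j + (n - 1) : ℕ) : ℝ) + 1 = n + j := by
    have : ((j + (n - 1) + 1 : ℕ) : ℝ) = ((n + j : ℕ) : ℝ) := by congr 1; omega
    push_cast at this ⊢
    exact this
  rw [this]

lemma Kf_int_shift (c : ℕ → ℝ) (n : ℕ) (θ x : ℝ) :
    ∫ t in (-π)..π, |Kf c n θ (x - t)| = ∫ t in (-π)..π, |Kf c n θ t| := by
  rw [intervalIntegral.integral_comp_sub_left (fun t => |Kf c n θ t|)]
  have hp : Function.Periodic (fun t => |Kf c n θ t|) (2 * π) := fun t => by
    have := ker_periodic c θ n 1 t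
    simp only [Int.cast_one, mul_one] at this
    simp only [Kf, this]
  have := hp.intervalIntegral_add_eq (x - π) (-π)
  rw [show x - π + 2 * π = x - -π by ring, show -π + 2 * π = π by ring] at this
  exact this

lemma dev_le {α r : ℝ} (hα : 0 < α) (hr0 : 0 < r) (hr1 : r < 1) {β : ℝ} {n : ℕ} (hn : n₁ α r ≤ n)
    {f : ℝ → ℝ} (hf : f ∈ poissonClass α r β ∞) (x : ℝ) :
    |f x - fourierSum (n - 1) f x| ≤ (1 / π) * (Real.exp (-α * (n : ℝ) ^ r) *
      (4 / π * Real.log (π / (α * r * (n : ℝ) ^ (r - 1))) + (π ^ 2 + 2 * π + 8))) := by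
  have hpi := Real.pi_pos
  obtain ⟨c0, φ, hφ, hfx⟩ := class_good hα hr0 hr1 hf
  have hK := KS_exp hα hr0 hr1 hn
  rw [dev_eq hα hr0 hr1 (n1_facts hα hr0 hr1 hn).1 hφ hfx x, abs_mul, abs_of_pos (by positivity)]
  have hu := hK.upper (β * π / 2)
  simp only [Nat.cast_zero, add_zero] at hu
  refine mul_le_mul_of_nonneg_left (le_trans ?_ hu) (by positivity)
  rw [← Kf_int_shift _ _ _ x, ← Real.norm_eq_abs]
  have hc : Continuous fun t => Kf (fun j : ℕ => Real.exp (-α * ((n : ℝ) + j) ^ r)) n (β * π / 2) (x - t) :=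
    (hK.cont _).comp (by fun_prop)
  refine intervalIntegral.norm_integral_le_of_norm_le (by linarith) ?_ (hc.abs.intervalIntegrable _ _)
  have := (ae_restrict_iff' measurableSet_Ioc).1 hφ.2
  filter_upwards [this] with t ht hmem
  rw [norm_mul]
  exact mul_le_of_le_one_right (norm_nonneg _) (ht hmem)

lemma dev_ge {α r : ℝ} (hα : 0 < α) (hr0 : 0 < r) (hr1 : r < 1) (β : ℝ) {n : ℕ} (hn : n₁ α r ≤ n) :
    ∃ f ∈ poissonClass α r β ∞, (1 / π) * (Real.exp (-α * (n : ℝ) ^ r) *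
      (4 / π * Real.log (π / (α * r * (n : ℝ) ^ (r - 1))) - (π ^ 2 + 2 * π + 8))) ≤
      |f 0 - fourierSum (n - 1) f 0| := by
  have hpi := Real.pi_pos
  have hK := KS_exp hα hr0 hr1 hn
  obtain ⟨s, hsm, hsb, hs0, hs⟩ := hK.lower (β * π / 2)
  simp only [Nat.cast_zero, add_zero] at hs
  set φ : ℝ → ℝ := fun t => s (toIocMod Real.two_pi_pos (-π) t) with hφ
  have hφs : ∀ t ∈ Set.Ioc (-π) π, φ t = s t := by
    intro t ht
    simp only [hφ]
    rw [(toIocMod_eq_self Real.two_pi_pos).2]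
    rw [show -π + 2 * π = π by ring]; exact ht
  have hper : ∀ t, φ (t + 2 * π) = φ t := fun t => by simp only [hφ, toIocMod_add_right]
  have hφb : ∀ t, |φ t| ≤ 1 := fun t => hsb _
  have hgood : Good φ := by
    refine ⟨(hsm.aestronglyMeasurable (μ := volume.restrict (Set.Ioc (-π) π))).congr ?_, Eventually.of_forall hφb⟩
    exact (ae_restrict_iff' measurableSet_Ioc).2 (Eventually.of_forall fun t ht => (hφs t ht).symm)
  have cong : ∀ g : ℝ → ℝ, ∫ t in (-π)..π, g t * φ t = ∫ t in (-π)..π, g t * s t := by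
    intro g
    apply intervalIntegral.integral_congr_ae
    rw [uIoc_pi]
    exact Eventually.of_forall fun t ht => by rw [hφs t ht]
  set f : ℝ → ℝ := fun x => 0 / 2 + (1 / π) * ∫ t in (-π)..π, genPoissonKernel α r β (x - t) * φ t with hf
  refine ⟨f, ⟨fun x => ?_, 0, φ, hper, ?_, ?_, fun x => rfl⟩, ?_⟩
  · simp only [hf]
    congr 2
    refine intervalIntegral.integral_congr fun t _ => ?_
    rw [show x + 2 * π - t = x - t + 2 * π by ring, kernel_per]
  · rw [eLpNorm_exponent_top]
    refine eLpNormEssSup_le_of_ae_enorm_bound (Eventually.of_forall fun t => ?_)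
    rw [Real.enorm_eq_ofReal_abs]
    exact ENNReal.ofReal_le_one.2 (hφb t)
  · have hp : Function.Periodic φ (2 * π) := hper
    have := hp.intervalIntegral_add_eq 0 (-π)
    rw [zero_add, show -π + 2 * π = π by ring] at this
    rw [this]
    have h1 := cong (fun _ => 1)
    simp only [one_mul] at h1
    rw [h1, hs0]
  · rw [dev_eq hα hr0 hr1 (n1_facts hα hr0 hr1 hn).1 hgood (c0 := 0 / 2) (β := β) (fun x => rfl) 0, cong]
    refine le_trans ?_ (le_abs_self _)
    simp only [zero_sub]
    exact mul_le_mul_of_nonneg_left hs (by positivity)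

theorem statement5 (α r β : ℝ)
    (hr0 : 0 < r) (hr1 : r < 1) (hα : 0 < α) :
    ∀ n : ℕ, n₁ α r ≤ n →
      ∃ γ : ℝ, |γ| ≤ 20 * π ^ 4 ∧
        EnC α r β ∞ n =
          4 / π ^ 2 * Real.exp (-α * (n : ℝ) ^ r) *
              Real.log (π * (n : ℝ) ^ (1 - r) / (α * r)) +
            γ * Real.exp (-α * (n : ℝ) ^ r) := by
  intro n hn
  have hpi := Real.pi_gt_three
  obtain ⟨h1, h2, h3⟩ := n1_facts hα hr0 hr1 hn
  have hn0 : (0 : ℝ) < n := by exact_mod_cast h1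
  have e2 : π * (n : ℝ) ^ (1 - r) / (α * r) = π / (α * r * (n : ℝ) ^ (r - 1)) := by
    rw [show (1 - r) = -(r - 1) by ring, Real.rpow_neg hn0.le]; field_simp
  rw [e2]
  have up := fun f (hf : f ∈ poissonClass α r β ∞) x => dev_le hα hr0 hr1 hn hf x
  obtain ⟨f₀, hf₀, low⟩ := dev_ge hα hr0 hr1 β hn
  set L := Real.log (π / (α * r * (n : ℝ) ^ (r - 1))) with hL
  set A := Real.exp (-α * (n : ℝ) ^ r) with hA
  have hA0 : 0 < A := Real.exp_pos _
  set U := (1 / π) * (A * (4 / π * L + (π ^ 2 + 2 * π + 8))) with hU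
  have hU0 : 0 ≤ U := (abs_nonneg _).trans (up f₀ hf₀ 0)
  have b1 : EnC α r β ∞ n ≤ U := by
    unfold EnC
    exact Real.iSup_le (fun f => Real.iSup_le (fun hf => Real.iSup_le (fun x => up f hf x) hU0) hU0) hU0
  have b2 : |f₀ 0 - fourierSum (n - 1) f₀ 0| ≤ EnC α r β ∞ n := by
    unfold EnC
    have s1 : |f₀ 0 - fourierSum (n - 1) f₀ 0| ≤ ⨆ x : ℝ, |f₀ x - fourierSum (n - 1) f₀ x| :=
      le_ciSup (f := fun x : ℝ => |f₀ x - fourierSum (n - 1) f₀ x|) ⟨U, by rintro _ ⟨x, rfl⟩; exact up f₀ hf₀ x⟩ 0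
    have s2 : (⨆ x : ℝ, |f₀ x - fourierSum (n - 1) f₀ x|) ≤
        ⨆ (_ : f₀ ∈ poissonClass α r β ∞), ⨆ x : ℝ, |f₀ x - fourierSum (n - 1) f₀ x| := by
      rw [ciSup_pos hf₀]
    refine s1.trans (s2.trans ?_)
    refine le_ciSup (f := fun f : ℝ → ℝ => ⨆ (_ : f ∈ poissonClass α r β ∞), ⨆ x : ℝ, |f x - fourierSum (n - 1) f x|)
      ⟨U, ?_⟩ f₀
    rintro _ ⟨f, rfl⟩
    exact Real.iSup_le (fun hf => Real.iSup_le (fun x => up f hf x) hU0) hU0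
  have b3 := low.trans b2
  set En := EnC α r β ∞ n
  refine ⟨(En - 4 / π ^ 2 * A * L) / A, ?_, by field_simp; ring⟩
  rw [abs_div, abs_of_pos hA0, div_le_iff₀ hA0]
  have e3 : U = 4 / π ^ 2 * A * L + (π + 2 + 8 / π) * A := by rw [hU]; field_simp
  have e4 : (1 / π) * (A * (4 / π * L - (π ^ 2 + 2 * π + 8))) = 4 / π ^ 2 * A * L - (π + 2 + 8 / π) * A := by
    field_simp
  rw [e3] at b1
  rw [e4] at b3
  have h8 : 8 / π ≤ 8 := div_le_self (by norm_num) (by linarith)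
  have hp4 : π + 2 + 8 / π ≤ 20 * π ^ 4 := by
    have : (1 : ℝ) ≤ π ^ 3 := one_le_pow₀ (by linarith)
    nlinarith
  have := mul_le_mul_of_nonneg_right hp4 hA0.le
  rw [abs_le]; constructor <;> linarith
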